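/- arXiv:1903.01479 — 5 statements merged into one kernel-verified Lean document; each statement's English description precedes it below -/
import Mathlib

section
/- Let ρ and σ be qubit density matrices with Bloch vectors (r_x,r_y,r_z) and (s_x,s_y,s_z), write r = √(r_x²+r_y²) and s = √(s_x²+s_y²), and let 0 < p ≤ 1. Then there exists a finite family (K_i) of strictly incoherent 2×2 Kraus operators with ∑_i K_iᴴK_i ⪯ I and ∑_i K_i ρ K_iᴴ = p·σ if and only if both of the following hold: (a) r²·s_z² + (1−r_z²)·s² ≤ r², and (b) either p ≤ 1−|r_z| or p²·s² ≤ (r²/(1+|r_z|))·(2p − (1−|r_z|)). (This is the paper's Theorem 1 characterizing which qubit states σ are reachable from ρ with probability p by a stochastic strictly incoherent operation; as established in its proof, condition (b) is only binding for p > 1−|r_z|.) -/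
open Matrix BigOperators
open scoped Kronecker Classical ComplexOrder

/-- The qubit state with Bloch vector `(rx, ry, rz)`:
`ρ = (1/2)(I + rx σx + ry σy + rz σz)`. -/
noncomputable def blochState (rx ry rz : ℝ) : Matrix (Fin 2) (Fin 2) ℂ :=
  !![(1 + rz : ℂ)/2, ((rx : ℂ) - ry * Complex.I)/2;
     ((rx : ℂ) + ry * Complex.I)/2, (1 - rz : ℂ)/2]

/-- `K` is an incoherent Kraus operator: every column has at most one nonzero entry. -/
def IsIncoherentKraus {d : ℕ} (K : Matrix (Fin d) (Fin d) ℂ) : Prop :=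
  ∀ j i i', K i j ≠ 0 → K i' j ≠ 0 → i = i'

/-- `K` is a strictly incoherent Kraus operator: every row and every column
has at most one nonzero entry. -/
def IsSIKraus {d : ℕ} (K : Matrix (Fin d) (Fin d) ℂ) : Prop :=
  (∀ i j j', K i j ≠ 0 → K i j' ≠ 0 → j = j') ∧
  (∀ j i i', K i j ≠ 0 → K i' j ≠ 0 → i = i')

/-- Partial trace over the first (A) factor. -/
noncomputable def ptraceA {dA dB : ℕ} (X : Matrix (Fin dA × Fin dB) (Fin dA × Fin dB) ℂ) :
    Matrix (Fin dB) (Fin dB) ℂ :=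
  fun j j' => ∑ i, X (i, j) (i, j')

/-- Partial trace over the second (B) factor. -/
noncomputable def ptraceB {dA dB : ℕ} (X : Matrix (Fin dA × Fin dB) (Fin dA × Fin dB) ℂ) :
    Matrix (Fin dA) (Fin dA) ℂ :=
  fun i i' => ∑ j, X (i, j) (i', j)

/-- The completely dephasing map: keep the diagonal of `X`. -/
noncomputable def dephase {d : ℕ} (X : Matrix (Fin d) (Fin d) ℂ) : Matrix (Fin d) (Fin d) ℂ :=
  Matrix.diagonal X.diag


def RealCond (rz sz p R S : ℝ) : Prop :=
  ∃ X Y U V l T : ℝ, 0 ≤ X ∧ 0 ≤ Y ∧ 0 ≤ U ∧ 0 ≤ V ∧ 0 ≤ l ∧ l ≤ 1 ∧ 0 ≤ T ∧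
    X + U ≤ 1 ∧ Y + V ≤ 1 ∧
    (1 + rz) * X + (1 - rz) * V = p * (1 + sz) ∧
    (1 - rz) * Y + (1 + rz) * U = p * (1 - sz) ∧
    X * Y = l ^ 2 * T ∧ U * V = (1 - l) ^ 2 * T ∧ p ^ 2 * S ≤ R * T

theorem RealCond.flip_s {rz sz p R S : ℝ} (h : RealCond rz sz p R S) :
    RealCond rz (-sz) p R S := by
  obtain ⟨X, Y, U, V, l, T, hX, hY, hU, hV, hl, hl1, hT, h1, h2, h3, h4, h5, h6, h7⟩ := h
  exact ⟨U, V, X, Y, 1 - l, T, hU, hV, hX, hY, by linarith, by linarith, hT, by linarith,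
    by linarith, by linarith, by linarith, by linarith, by rw [h5]; ring, h7⟩

theorem RealCond.flip_r {rz sz p R S : ℝ} (h : RealCond rz sz p R S) :
    RealCond (-rz) sz p R S := by
  obtain ⟨X, Y, U, V, l, T, hX, hY, hU, hV, hl, hl1, hT, h1, h2, h3, h4, h5, h6, h7⟩ := h
  exact ⟨V, U, Y, X, 1 - l, T, hV, hU, hY, hX, by linarith, by linarith, hT, by linarith,
    by linarith, by linarith, by linarith, by linarith, by rw [mul_comm, h5]; ring, h7⟩

theorem realCond_zero {rz sz p R S : ℝ} (hp0 : 0 < p) (hp1 : p ≤ 1)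
    (hsz : |sz| ≤ 1) (h : p ^ 2 * S ≤ 0) (hR : 0 ≤ R) : RealCond rz sz p R S := by
  obtain ⟨h1, h2⟩ := abs_le.mp hsz
  have e1 : 0 ≤ p * (1 + sz) / 2 := by have := mul_nonneg hp0.le (by linarith : 0 ≤ 1 + sz); linarith
  have e2 : 0 ≤ p * (1 - sz) / 2 := by have := mul_nonneg hp0.le (by linarith : 0 ≤ 1 - sz); linarith
  refine ⟨p * (1 + sz) / 2, p * (1 - sz) / 2, p * (1 - sz) / 2, p * (1 + sz) / 2, 1 / 2,
    4 * (p * (1 + sz) / 2 * (p * (1 - sz) / 2)), e1, e2, e2, e1, by norm_num, by norm_num,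
    by positivity, by linarith, by linarith, by ring, by ring, by ring, by ring, ?_⟩
  refine h.trans (by positivity)

theorem realCond_pos {rz sz p R S : ℝ} (hp0 : 0 < p) (hp1 : p ≤ 1) (hR : 0 ≤ R)
    (hrz : 0 ≤ rz) (hrz1 : rz < 1) (hsz : 0 ≤ sz) (hsz1 : sz ≤ 1)
    (ha : R * sz ^ 2 + (1 - rz ^ 2) * S ≤ R)
    (hb : p ≤ 1 - rz ∨ p ^ 2 * S ≤ R / (1 + rz) * (2 * p - (1 - rz))) :
    RealCond rz sz p R S := by
  have hA : 0 < 1 + rz := by linarith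
  have hB : 0 < 1 - rz := by linarith
  have hc : 0 ≤ 1 - sz := by linarith
  have hc' : 0 ≤ 1 + sz := by linarith
  have key : p ^ 2 * S ≤ R * (p ^ 2 * (1 - sz ^ 2) / ((1 + rz) * (1 - rz))) := by
    rw [← mul_div_assoc, le_div_iff₀ (by positivity)]
    nlinarith [mul_le_mul_of_nonneg_left ha (sq_nonneg p)]
  have hT : 0 ≤ p ^ 2 * (1 - sz ^ 2) / ((1 + rz) * (1 - rz)) := by
    have : 0 ≤ 1 - sz ^ 2 := by nlinarith
    positivity
  by_cases h1 : p ≤ 1 - rz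
  · refine ⟨p / (1 + rz) * ((1 + sz) / 2), p / (1 - rz) * ((1 - sz) / 2),
      p / (1 + rz) * ((1 - sz) / 2), p / (1 - rz) * ((1 + sz) / 2), 1 / 2, _,
      by positivity, by positivity, by positivity, by positivity, by norm_num, by norm_num,
      hT, ?_, ?_, ?_, ?_, ?_, ?_, key⟩
    · have : p / (1 + rz) ≤ 1 := by rw [div_le_one hA]; linarith
      linarith
    · have : p / (1 - rz) ≤ 1 := by rw [div_le_one hB]; linarith
      linarith
    · field_simp; ring
    · field_simp; ring
    · field_simp; ring
    · field_simp; ring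
  · have hb' := hb.resolve_left h1
    push Not at h1
    by_cases h2 : 1 - rz ≤ p * (1 - sz)
    · have hsp : 0 ≤ p * sz := by positivity
      have hD : 0 < 2 * p - 2 * (1 - rz) := by linarith
      set l := (p * (1 + sz) - (1 - rz)) / (2 * p - 2 * (1 - rz)) with hl
      have hl0 : 0 ≤ l := div_nonneg (by linarith) hD.le
      have hl1 : l ≤ 1 := by rw [hl, div_le_one hD]; linarith
      have hle : l * (2 * p - 2 * (1 - rz)) = p * (1 + sz) - (1 - rz) := by
        rw [hl]; field_simp
      set t := (2 * p - (1 - rz)) / (1 + rz) with ht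
      have ht0 : 0 ≤ t := div_nonneg (by linarith) hA.le
      have ht1 : t ≤ 1 := by rw [ht, div_le_one hA]; linarith
      have hte : (1 + rz) * t = 2 * p - (1 - rz) := by rw [ht]; field_simp
      have hl1' : 0 ≤ 1 - l := by linarith
      refine ⟨l * t, l, (1 - l) * t, 1 - l, l, t, by positivity, hl0, by positivity, hl1', hl0,
        hl1, ht0, by linarith, by linarith, ?_, ?_, by ring, by ring, ?_⟩
      · linear_combination l * hte + hle
      · linear_combination (1 - l) * hte - hle
      · rw [ht]; calc _ ≤ _ := hb'
          _ = _ := by ring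
    · push Not at h2
      have hsp : 0 < 2 * (p * sz) := by nlinarith
      set m := (p * (1 + sz) - (1 - rz)) / (2 * (p * sz)) with hm
      have hm0 : 0 ≤ m := div_nonneg (by nlinarith) hsp.le
      have hm1 : m ≤ 1 := by rw [hm, div_le_one hsp]; linarith
      have hm1' : 0 ≤ 1 - m := by linarith
      have hme : m * (2 * (p * sz)) = p * (1 + sz) - (1 - rz) := by
        rw [hm, div_mul_cancel₀ _ hsp.ne']
      refine ⟨p * (1 + sz) * m / (1 + rz), p * (1 - sz) * m / (1 - rz),
        p * (1 - sz) * (1 - m) / (1 + rz), p * (1 + sz) * (1 - m) / (1 - rz), m, _,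
        by positivity, by positivity, by positivity, by positivity, hm0, hm1, hT,
        ?_, ?_, ?_, ?_, ?_, ?_, key⟩
      · rw [← add_div, div_le_one hA]; nlinarith
      · rw [← add_div, div_le_one hB]; nlinarith
      · field_simp; ring
      · field_simp; ring
      · field_simp; ring
      · field_simp; ring

theorem realCond_of {rx ry rz sx sy sz p : ℝ}
    (hr : rx ^ 2 + ry ^ 2 + rz ^ 2 ≤ 1) (hs : sx ^ 2 + sy ^ 2 + sz ^ 2 ≤ 1)
    (hp0 : 0 < p) (hp1 : p ≤ 1)
    (ha : (rx ^ 2 + ry ^ 2) * sz ^ 2 + (1 - rz ^ 2) * (sx ^ 2 + sy ^ 2) ≤ rx ^ 2 + ry ^ 2)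
    (hb : p ≤ 1 - |rz| ∨
        p ^ 2 * (sx ^ 2 + sy ^ 2) ≤
          (rx ^ 2 + ry ^ 2) / (1 + |rz|) * (2 * p - (1 - |rz|))) :
    RealCond rz sz p (rx ^ 2 + ry ^ 2) (sx ^ 2 + sy ^ 2) := by
  have hR : 0 ≤ rx ^ 2 + ry ^ 2 := by positivity
  have hrz1 : |rz| ≤ 1 := by
    rw [← sq_le_one_iff_abs_le_one]; linarith
  have hsz1 : |sz| ≤ 1 := by
    rw [← sq_le_one_iff_abs_le_one]; nlinarith [sq_nonneg sx, sq_nonneg sy]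
  rcases hrz1.lt_or_eq with h | h
  · have := realCond_pos hp0 hp1 hR (abs_nonneg rz) h (abs_nonneg sz) hsz1
      (by rwa [sq_abs, sq_abs]) hb
    rcases abs_choice rz with e | e <;> rcases abs_choice sz with f | f <;> rw [e, f] at this
    · exact this
    · simpa using this.flip_s
    · simpa using this.flip_r
    · simpa using this.flip_s.flip_r
  · have h2 : rz ^ 2 = 1 := by rw [← sq_abs, h]; norm_num
    have h3 : rx ^ 2 + ry ^ 2 = 0 := by linarith
    apply realCond_zero hp0 hp1 hsz1 _ hR
    rcases hb with hb | hb
    · linarith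
    · rw [h3] at hb; simpa using hb

theorem real_nec {rz sz p R S x y u v : ℝ} (hp0 : 0 < p) (hR : 0 ≤ R) (hrz1 : |rz| ≤ 1)
    (hx : 0 ≤ x) (hy : 0 ≤ y) (hu : 0 ≤ u) (hv : 0 ≤ v)
    (h1 : x ^ 2 + u ^ 2 ≤ 1) (h2 : y ^ 2 + v ^ 2 ≤ 1)
    (h3 : (1 + rz) * x ^ 2 + (1 - rz) * v ^ 2 = p * (1 + sz))
    (h4 : (1 - rz) * y ^ 2 + (1 + rz) * u ^ 2 = p * (1 - sz))
    (h5 : p ^ 2 * S ≤ R * (x * y + u * v) ^ 2) :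
    (R * sz ^ 2 + (1 - rz ^ 2) * S ≤ R ∧
      (p ≤ 1 - |rz| ∨ p ^ 2 * S ≤ R / (1 + |rz|) * (2 * p - (1 - |rz|)))) := by
  obtain ⟨hl, hu'⟩ := abs_le.mp hrz1
  constructor
  · have hc : (1 - rz ^ 2) * (x * y + u * v) ^ 2 ≤ (p * (1 + sz)) * (p * (1 - sz)) := by
      rw [← h3, ← h4]
      nlinarith [sq_nonneg ((1 + rz) * (x * u) - (1 - rz) * (v * y))]
    have h6 : (1 - rz ^ 2) * (p ^ 2 * S) ≤ (1 - rz ^ 2) * (R * (x * y + u * v) ^ 2) :=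
      mul_le_mul_of_nonneg_left h5 (by nlinarith)
    have h7 := mul_le_mul_of_nonneg_left hc hR
    have h8 : p ^ 2 * (R * sz ^ 2 + (1 - rz ^ 2) * S) ≤ p ^ 2 * R := by nlinarith
    exact le_of_mul_le_mul_left h8 (by positivity)
  · by_cases hp : p ≤ 1 - |rz|
    · exact Or.inl hp
    right
    push Not at hp
    have hcs : (x * y + u * v) ^ 2 ≤ (x ^ 2 + u ^ 2) * (y ^ 2 + v ^ 2) := by
      nlinarith [sq_nonneg (x * v - u * y)]
    have gen : ∀ q t w : ℝ, 0 ≤ q → w ≤ 1 → q ≤ 1 → 1 - q < p →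
        (1 + q) * t + (1 - q) * w = 2 * p → t * w ≤ (2 * p - (1 - q)) / (1 + q) := by
      intro q t w hq hw hq1 hpq he
      rw [le_div_iff₀ (by linarith)]
      have : t * w * (1 + q) = w * (2 * p - (1 - q) * w) := by rw [← he]; ring
      rw [this]
      have : 0 ≤ (1 - w) * (2 * p - (1 - q) * (1 + w)) :=
        mul_nonneg (by linarith) (by nlinarith)
      nlinarith
    have hT : (x ^ 2 + u ^ 2) * (y ^ 2 + v ^ 2) ≤ (2 * p - (1 - |rz|)) / (1 + |rz|) := by
      rcases abs_choice rz with e | e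
      · apply gen _ _ _ (abs_nonneg _) h2 hrz1 hp
        rw [e]; linarith
      · rw [mul_comm]
        apply gen _ _ _ (abs_nonneg _) h1 hrz1 hp
        rw [e]; linarith
    calc _ ≤ _ := h5
      _ ≤ R * ((2 * p - (1 - |rz|)) / (1 + |rz|)) :=
        mul_le_mul_of_nonneg_left (hcs.trans hT) hR
      _ = _ := by ring

theorem isSI_diag (x y : ℂ) : IsSIKraus !![x, 0; 0, y] := by
  constructor <;> intro i j k <;> fin_cases i <;> fin_cases j <;> fin_cases k <;> simp

theorem isSI_anti (x y : ℂ) : IsSIKraus !![0, x; y, 0] := by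
  constructor <;> intro i j k <;> fin_cases i <;> fin_cases j <;> fin_cases k <;> simp

theorem isSI_cases {K : Matrix (Fin 2) (Fin 2) ℂ} (h : IsSIKraus K) :
    (K 0 1 = 0 ∧ K 1 0 = 0) ∨ (K 0 0 = 0 ∧ K 1 1 = 0) := by
  obtain ⟨h1, h2⟩ := h
  have a := h1 0 0 1
  have b := h1 1 0 1
  have c := h2 0 0 1
  have d := h2 1 0 1
  simp only [Fin.isValue, zero_ne_one, imp_false, not_not, ne_eq] at a b c d
  tauto

theorem kraus_of_real {rx ry rz sx sy sz p : ℝ}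
    (h : RealCond rz sz p (rx ^ 2 + ry ^ 2) (sx ^ 2 + sy ^ 2)) :
    (∃ (N : ℕ) (K : Fin N → Matrix (Fin 2) (Fin 2) ℂ),
        (∀ i, IsSIKraus (K i)) ∧
        ((1 : Matrix (Fin 2) (Fin 2) ℂ) - ∑ i, (K i)ᴴ * K i).PosSemidef ∧
        ∑ i, K i * blochState rx ry rz * (K i)ᴴ = (p : ℂ) • blochState sx sy sz) := by
  obtain ⟨X, Y, U, V, l, T, hX, hY, hU, hV, hl, hl1, hT, h1, h2, h3, h4, h5, h6, h7⟩ := h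
  have hxy : √X * √Y = l * √T := by
    rw [← Real.sqrt_mul hX, h5, Real.sqrt_mul (sq_nonneg _), Real.sqrt_sq hl]
  have huv : √U * √V = (1 - l) * √T := by
    rw [← Real.sqrt_mul hU, h6, Real.sqrt_mul (sq_nonneg _), Real.sqrt_sq (by linarith)]
  have hx2 := Real.mul_self_sqrt hX
  have hy2 := Real.mul_self_sqrt hY
  have hu2 := Real.mul_self_sqrt hU
  have hv2 := Real.mul_self_sqrt hV
  have hm2 := Real.mul_self_sqrt hT
  obtain ⟨e, f, g, he, hf, hce, hcf⟩ : ∃ (e f : ℂ) (g : ℝ), Complex.normSq e + g * g = 1 ∧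
      Complex.normSq f + g * g = 1 ∧
      e * (((rx : ℂ) + ry * Complex.I) * (√T : ℝ)) = p * ((sx : ℂ) + sy * Complex.I) ∧
      f * (((rx : ℂ) - ry * Complex.I) * (√T : ℝ)) = p * ((sx : ℂ) + sy * Complex.I) := by
    have n1 : Complex.normSq (((rx : ℂ) + ry * Complex.I) * (√T : ℝ)) =
        (rx ^ 2 + ry ^ 2) * T := by
      rw [Complex.normSq_mul, Complex.normSq_add_mul_I, Complex.normSq_ofReal, hm2]
    have n2 : Complex.normSq (((rx : ℂ) - ry * Complex.I) * (√T : ℝ)) =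
        (rx ^ 2 + ry ^ 2) * T := by
      rw [Complex.normSq_mul, Complex.normSq_ofReal, hm2]
      congr 1
      have := Complex.normSq_add_mul_I rx (-ry)
      simp only [Complex.ofReal_neg, neg_mul, ← sub_eq_add_neg, neg_sq] at this
      exact this
    have n3 : Complex.normSq (p * ((sx : ℂ) + sy * Complex.I)) = p ^ 2 * (sx ^ 2 + sy ^ 2) := by
      rw [Complex.normSq_mul, Complex.normSq_add_mul_I, Complex.normSq_ofReal, sq p]
    have hle : p ^ 2 * (sx ^ 2 + sy ^ 2) / ((rx ^ 2 + ry ^ 2) * T) ≤ 1 :=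
      div_le_one_of_le₀ h7 (by positivity)
    have hg := Real.mul_self_sqrt (sub_nonneg.mpr hle)
    have hz : ∀ z : ℂ, Complex.normSq z = (rx ^ 2 + ry ^ 2) * T →
        p * ((sx : ℂ) + sy * Complex.I) / z * z = p * ((sx : ℂ) + sy * Complex.I) := by
      intro z hz
      by_cases h0 : z = 0
      · have : Complex.normSq (p * ((sx : ℂ) + sy * Complex.I)) = 0 := by
          apply le_antisymm _ (Complex.normSq_nonneg _)
          rw [n3]; rw [h0, Complex.normSq_zero] at hz; linarith
        rw [Complex.normSq_eq_zero.mp this]; simp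
      · exact div_mul_cancel₀ _ h0
    refine ⟨_, _, √(1 - p ^ 2 * (sx ^ 2 + sy ^ 2) / ((rx ^ 2 + ry ^ 2) * T)), ?_, ?_,
      hz _ n1, hz _ n2⟩
    · rw [Complex.normSq_div, n3, n1, hg]; ring
    · rw [Complex.normSq_div, n3, n2, hg]; ring
  have he' : e * (starRingEnd ℂ) e + g * g = 1 := by rw [Complex.mul_conj]; exact_mod_cast he
  have hf' : f * (starRingEnd ℂ) f + g * g = 1 := by rw [Complex.mul_conj]; exact_mod_cast hf
  have hce' := congrArg (starRingEnd ℂ) hce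
  have hcf' := congrArg (starRingEnd ℂ) hcf
  simp only [map_mul, map_add, map_sub, Complex.conj_ofReal, Complex.conj_I] at hce' hcf'
  generalize √X = x at *
  generalize √Y = y at *
  generalize √U = u at *
  generalize √V = v at *
  generalize √T = m at *
  have hxy' : (x : ℂ) * y = l * m := by exact_mod_cast hxy
  have huv' : (u : ℂ) * v = (1 - l) * m := by exact_mod_cast huv
  have hx2' : (x : ℂ) * x = X := by exact_mod_cast hx2
  have hy2' : (y : ℂ) * y = Y := by exact_mod_cast hy2
  have hu2' : (u : ℂ) * u = U := by exact_mod_cast hu2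
  have hv2' : (v : ℂ) * v = V := by exact_mod_cast hv2
  have h3' : (1 + rz : ℂ) * X + (1 - rz) * V = p * (1 + sz) := by exact_mod_cast h3
  have h4' : (1 - rz : ℂ) * Y + (1 + rz) * U = p * (1 - sz) := by exact_mod_cast h4
  refine ⟨4, ![!![(x : ℂ), 0; 0, e * y], !![0, 0; 0, (g * y : ℂ)], !![0, (v : ℂ); f * u, 0],
    !![0, 0; (g * u : ℂ), 0]], ?_, ?_, ?_⟩
  · intro i
    fin_cases i
    · exact isSI_diag _ _
    · exact isSI_diag _ _
    · exact isSI_anti _ _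
    · exact isSI_anti _ _
  · have : (1 : Matrix (Fin 2) (Fin 2) ℂ) - ∑ i, ((![!![(x : ℂ), 0; 0, e * y],
        !![0, 0; 0, (g * y : ℂ)], !![0, (v : ℂ); f * u, 0], !![0, 0; (g * u : ℂ), 0]] :
        Fin 4 → Matrix (Fin 2) (Fin 2) ℂ) i)ᴴ *
        (![!![(x : ℂ), 0; 0, e * y],
        !![0, 0; 0, (g * y : ℂ)], !![0, (v : ℂ); f * u, 0], !![0, 0; (g * u : ℂ), 0]] :
        Fin 4 → Matrix (Fin 2) (Fin 2) ℂ) i =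
        Matrix.diagonal ![((1 - (X + U) : ℝ) : ℂ), ((1 - (Y + V) : ℝ) : ℂ)] := by
      ext i j
      fin_cases i <;> fin_cases j <;>
        simp [Fin.sum_univ_four, Matrix.mul_apply, Fin.sum_univ_two]
      · linear_combination hx2' + hu2' + u * u * hf'
      · linear_combination hy2' + hv2' + y * y * he'
    rw [this]
    apply Matrix.PosSemidef.diagonal
    intro i
    fin_cases i
    · simp only [Pi.zero_apply]
      exact Complex.zero_le_real.mpr (by linarith)
    · simp only [Pi.zero_apply]
      exact Complex.zero_le_real.mpr (by linarith)
  · ext i j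
    fin_cases i <;> fin_cases j <;>
      simp [Fin.sum_univ_four, Matrix.vecMul, dotProduct, Fin.sum_univ_two, blochState]
    · linear_combination (1 + rz) / 2 * hx2' + (1 - rz) / 2 * hv2' + h3' / 2
    · linear_combination (rx - ry * Complex.I) / 2 * (starRingEnd ℂ) e * hxy' +
        (rx + ry * Complex.I) / 2 * (starRingEnd ℂ) f * huv' + l / 2 * hce' + (1 - l) / 2 * hcf'
    · linear_combination (rx + ry * Complex.I) / 2 * e * hxy' +
        (rx - ry * Complex.I) / 2 * f * huv' + l / 2 * hce + (1 - l) / 2 * hcf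
    · linear_combination (1 - rz) / 2 * hy2' + (1 + rz) / 2 * hu2' + h4' / 2 +
        (1 - rz) / 2 * y * y * he' + (1 + rz) / 2 * u * u * hf'

theorem real_of_kraus {rx ry rz sx sy sz p : ℝ} 
    (h : ∃ (N : ℕ) (K : Fin N → Matrix (Fin 2) (Fin 2) ℂ),
        (∀ i, IsSIKraus (K i)) ∧
        ((1 : Matrix (Fin 2) (Fin 2) ℂ) - ∑ i, (K i)ᴴ * K i).PosSemidef ∧
        ∑ i, K i * blochState rx ry rz * (K i)ᴴ = (p : ℂ) • blochState sx sy sz) :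
    ∃ x y u v : ℝ, 0 ≤ x ∧ 0 ≤ y ∧ 0 ≤ u ∧ 0 ≤ v ∧ x ^ 2 + u ^ 2 ≤ 1 ∧ y ^ 2 + v ^ 2 ≤ 1 ∧
      (1 + rz) * x ^ 2 + (1 - rz) * v ^ 2 = p * (1 + sz) ∧
      (1 - rz) * y ^ 2 + (1 + rz) * u ^ 2 = p * (1 - sz) ∧
      p ^ 2 * (sx ^ 2 + sy ^ 2) ≤ (rx ^ 2 + ry ^ 2) * (x * y + u * v) ^ 2 := by
  obtain ⟨N, K, hK, hpos, heq⟩ := h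
  have nn : ∀ a b, 0 ≤ ∑ i, ‖K i a b‖ ^ 2 := fun a b => Finset.sum_nonneg fun i _ => sq_nonneg _
  have q1 : ∀ z : ℂ, z * (starRingEnd ℂ) z = ((‖z‖ ^ 2 : ℝ) : ℂ) := by
    intro z; rw [Complex.mul_conj, Complex.normSq_eq_norm_sq]
  have q2 : ∀ z : ℂ, (starRingEnd ℂ) z * z = ((‖z‖ ^ 2 : ℝ) : ℂ) := by
    intro z; rw [mul_comm, q1]
  have e00 := congrFun (congrFun heq 0) 0
  have e11 := congrFun (congrFun heq 1) 1
  have e10 := congrFun (congrFun heq 1) 0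
  have d0 := hpos.diag_nonneg (i := 0)
  have d1 := hpos.diag_nonneg (i := 1)
  rw [Matrix.sum_apply] at e00 e11 e10
  rw [Matrix.sub_apply, Matrix.sum_apply] at d0 d1
  have f00 : ∀ i, (K i * blochState rx ry rz * (K i)ᴴ) 0 0 =
      (((1 + rz) / 2 * ‖K i 0 0‖ ^ 2 + (1 - rz) / 2 * ‖K i 0 1‖ ^ 2 : ℝ) : ℂ) := by
    intro i
    have a := q1 (K i 0 0)
    have b := q1 (K i 0 1)
    push_cast at a b ⊢
    rw [← a, ← b]
    rcases isSI_cases (hK i) with ⟨h1, h2⟩ | ⟨h1, h2⟩ <;>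
      simp [Matrix.mul_apply, Fin.sum_univ_two, blochState, h1] <;> ring
  have f11 : ∀ i, (K i * blochState rx ry rz * (K i)ᴴ) 1 1 =
      (((1 + rz) / 2 * ‖K i 1 0‖ ^ 2 + (1 - rz) / 2 * ‖K i 1 1‖ ^ 2 : ℝ) : ℂ) := by
    intro i
    have a := q1 (K i 1 0)
    have b := q1 (K i 1 1)
    push_cast at a b ⊢
    rw [← a, ← b]
    rcases isSI_cases (hK i) with ⟨h1, h2⟩ | ⟨h1, h2⟩ <;>
      simp [Matrix.mul_apply, Fin.sum_univ_two, blochState, h2] <;> ring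
  have hc1 : ‖((rx : ℂ) + ry * Complex.I) / 2‖ = √(rx ^ 2 + ry ^ 2) / 2 := by
    rw [norm_div, Complex.norm_add_mul_I]; simp
  have hc2 : ‖((rx : ℂ) - ry * Complex.I) / 2‖ = √(rx ^ 2 + ry ^ 2) / 2 := by
    have := Complex.norm_add_mul_I rx (-ry)
    simp only [Complex.ofReal_neg, neg_mul, ← sub_eq_add_neg, neg_sq] at this
    rw [norm_div, this]; simp
  have f10 : ∀ i, ‖(K i * blochState rx ry rz * (K i)ᴴ) 1 0‖ ≤
      √(rx ^ 2 + ry ^ 2) / 2 * (‖K i 0 0‖ * ‖K i 1 1‖ + ‖K i 1 0‖ * ‖K i 0 1‖) := by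
    intro i
    apply le_of_eq
    rcases isSI_cases (hK i) with ⟨h1, h2⟩ | ⟨h1, h2⟩
    · have : (K i * blochState rx ry rz * (K i)ᴴ) 1 0 =
          K i 1 1 * (((rx : ℂ) + ry * Complex.I) / 2) * (starRingEnd ℂ) (K i 0 0) := by
        simp [Matrix.mul_apply, Fin.sum_univ_two, blochState, h1, h2]
      rw [this, norm_mul, norm_mul, hc1, RCLike.norm_conj, h1]
      simp; ring
    · have : (K i * blochState rx ry rz * (K i)ᴴ) 1 0 =
          K i 1 0 * (((rx : ℂ) - ry * Complex.I) / 2) * (starRingEnd ℂ) (K i 0 1) := by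
        simp [Matrix.mul_apply, Fin.sum_univ_two, blochState, h1, h2]
      rw [this, norm_mul, norm_mul, hc2, RCLike.norm_conj, h1]
      simp; ring
  have g0 : ∀ i, ((K i)ᴴ * K i) 0 0 = ((‖K i 0 0‖ ^ 2 + ‖K i 1 0‖ ^ 2 : ℝ) : ℂ) := by
    intro i
    have a := q2 (K i 0 0)
    have b := q2 (K i 1 0)
    push_cast at a b ⊢
    rw [← a, ← b]
    simp [Matrix.mul_apply, Fin.sum_univ_two]
  have g1 : ∀ i, ((K i)ᴴ * K i) 1 1 = ((‖K i 1 1‖ ^ 2 + ‖K i 0 1‖ ^ 2 : ℝ) : ℂ) := by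
    intro i
    have a := q2 (K i 1 1)
    have b := q2 (K i 0 1)
    push_cast at a b ⊢
    rw [← a, ← b]
    simp [Matrix.mul_apply, Fin.sum_univ_two, add_comm]
  refine ⟨√(∑ i, ‖K i 0 0‖ ^ 2), √(∑ i, ‖K i 1 1‖ ^ 2), √(∑ i, ‖K i 1 0‖ ^ 2),
    √(∑ i, ‖K i 0 1‖ ^ 2), Real.sqrt_nonneg _, Real.sqrt_nonneg _, Real.sqrt_nonneg _,
    Real.sqrt_nonneg _, ?_, ?_, ?_, ?_, ?_⟩
  · rw [Real.sq_sqrt (nn _ _), Real.sq_sqrt (nn _ _), ← Finset.sum_add_distrib]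
    simp only [g0, Matrix.one_apply_eq] at d0
    rw [← Complex.ofReal_sum, ← Complex.ofReal_one, ← Complex.ofReal_sub,
      Complex.zero_le_real] at d0
    linarith
  · rw [Real.sq_sqrt (nn _ _), Real.sq_sqrt (nn _ _), ← Finset.sum_add_distrib]
    simp only [g1, Matrix.one_apply_eq] at d1
    rw [← Complex.ofReal_sum, ← Complex.ofReal_one, ← Complex.ofReal_sub,
      Complex.zero_le_real] at d1
    linarith
  · rw [Real.sq_sqrt (nn _ _), Real.sq_sqrt (nn _ _)]
    simp only [f00] at e00
    have : ((p : ℂ) • blochState sx sy sz) 0 0 = ((p * ((1 + sz) / 2) : ℝ) : ℂ) := by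
      simp [blochState]
    rw [this, ← Complex.ofReal_sum, Complex.ofReal_inj, Finset.sum_add_distrib,
      ← Finset.mul_sum, ← Finset.mul_sum] at e00
    linarith
  · rw [Real.sq_sqrt (nn _ _), Real.sq_sqrt (nn _ _)]
    simp only [f11] at e11
    have : ((p : ℂ) • blochState sx sy sz) 1 1 = ((p * ((1 - sz) / 2) : ℝ) : ℂ) := by
      simp [blochState]
    rw [this, ← Complex.ofReal_sum, Complex.ofReal_inj, Finset.sum_add_distrib,
      ← Finset.mul_sum, ← Finset.mul_sum] at e11
    linarith
  · have hn : ‖((p : ℂ) • blochState sx sy sz) 1 0‖ = |p| * (√(sx ^ 2 + sy ^ 2) / 2) := by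
      have : ((p : ℂ) • blochState sx sy sz) 1 0 = p * (((sx : ℂ) + sy * Complex.I) / 2) := by
        simp [blochState]
      rw [this, norm_mul, norm_div, Complex.norm_add_mul_I]; simp
    have hle : |p| * (√(sx ^ 2 + sy ^ 2) / 2) ≤ √(rx ^ 2 + ry ^ 2) / 2 *
        (√(∑ i, ‖K i 0 0‖ ^ 2) * √(∑ i, ‖K i 1 1‖ ^ 2) +
          √(∑ i, ‖K i 1 0‖ ^ 2) * √(∑ i, ‖K i 0 1‖ ^ 2)) := by
      rw [← hn, ← e10]
      refine (norm_sum_le _ _).trans ((Finset.sum_le_sum fun i _ => f10 i).trans ?_)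
      rw [← Finset.mul_sum, Finset.sum_add_distrib]
      exact mul_le_mul_of_nonneg_left (add_le_add (Real.sum_mul_le_sqrt_mul_sqrt _ _ _)
        (Real.sum_mul_le_sqrt_mul_sqrt _ _ _)) (by positivity)
    have h2 := pow_le_pow_left₀ (by positivity) hle 2
    rw [mul_pow, mul_pow, div_pow, div_pow, Real.sq_sqrt (by positivity),
      Real.sq_sqrt (by positivity), sq_abs] at h2
    linarith

/-- **Theorem 1 (paper).** A qubit state `σ` with Bloch vector `(sx,sy,sz)` is reachable
from `ρ` with Bloch vector `(rx,ry,rz)` with probability `p` by a stochastic strictly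
incoherent operation iff the ellipsoid and cylinder conditions hold. -/
theorem stochastic_sio_qubit_conversion_iff
    (rx ry rz sx sy sz : ℝ)
    (hr : rx ^ 2 + ry ^ 2 + rz ^ 2 ≤ 1) (hs : sx ^ 2 + sy ^ 2 + sz ^ 2 ≤ 1)
    (p : ℝ) (hp0 : 0 < p) (hp1 : p ≤ 1) :
    (∃ (N : ℕ) (K : Fin N → Matrix (Fin 2) (Fin 2) ℂ),
        (∀ i, IsSIKraus (K i)) ∧
        ((1 : Matrix (Fin 2) (Fin 2) ℂ) - ∑ i, (K i)ᴴ * K i).PosSemidef ∧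
        ∑ i, K i * blochState rx ry rz * (K i)ᴴ = (p : ℂ) • blochState sx sy sz) ↔
    ((rx ^ 2 + ry ^ 2) * sz ^ 2 + (1 - rz ^ 2) * (sx ^ 2 + sy ^ 2) ≤ rx ^ 2 + ry ^ 2 ∧
      (p ≤ 1 - |rz| ∨
        p ^ 2 * (sx ^ 2 + sy ^ 2) ≤
          (rx ^ 2 + ry ^ 2) / (1 + |rz|) * (2 * p - (1 - |rz|)))) := by
  constructor
  · intro h
    obtain ⟨x, y, u, v, hx, hy, hu, hv, h1, h2, h3, h4, h5⟩ := real_of_kraus h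
    have hrz1 : |rz| ≤ 1 := by
      rw [← sq_le_one_iff_abs_le_one]; nlinarith [sq_nonneg rx, sq_nonneg ry]
    exact real_nec hp0 (by positivity) hrz1 hx hy hu hv h1 h2 h3 h4 h5
  · rintro ⟨ha, hb⟩
    exact kraus_of_real (realCond_of hr hs hp0 hp1 ha hb)
end

section
/- Let ρ and σ be qubit density matrices with Bloch vectors (r_x,r_y,r_z) and (s_x,s_y,s_z), write r = √(r_x²+r_y²) > 0 and s = √(s_x²+s_y²) > 0 (both states coherent), and define P = sSup{ p ≥ 0 | ∃ a finite family (K_i) of strictly incoherent 2×2 Kraus operators with ∑_i K_iᴴK_i ⪯ I and ∑_i K_i ρ K_iᴴ = p·σ }. If r²·s_z² + (1−r_z²)·s² > r², then P = 0. Otherwise P = min{ (r²/((1+|r_z|)·s²))·(1 + √(1 − s²·(1−r_z²)/r²)), 1 }, and the supremum is attained by some such family. -/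
open Matrix BigOperators
open scoped Kronecker Classical ComplexOrder

lemma aux_cs (w a b c d t1 t2 : ℝ) (hw : 0 ≤ w) (ha : 0 ≤ a) (hb : 0 ≤ b) (hc : 0 ≤ c) (hd : 0 ≤ d)
    (ht1 : 0 ≤ t1) (ht2 : 0 ≤ t2) (h1 : w * t1 ^ 2 ≤ a * b) (h2 : w * t2 ^ 2 ≤ c * d) :
    w * (t1 + t2) ^ 2 ≤ (a + c) * (b + d) := by
  have h3 : (w * t1 ^ 2) * (w * t2 ^ 2) ≤ (a * b) * (c * d) :=
    mul_le_mul h1 h2 (by positivity) (by positivity)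
  have h4 : 2 * (w * t1 * t2) ≤ a * d + c * b := by
    apply (abs_le.1 (abs_le_of_sq_le_sq (b := a * d + c * b) ?_ (by positivity))).2
    nlinarith [sq_nonneg (a * d - c * b)]
  nlinarith

lemma aux_upper (m n k α β : ℝ) (hn : 0 < n) (hmn : n ≤ m) (hsum : m + n = 1) (hk : 0 < k)
    (h4 : 4 * m * n * k ≤ 1) (hα0 : 0 ≤ α) (hα : α ≤ 1) (hβ0 : 0 ≤ β) (hβ : β ≤ 1)
    (h : k * (α * m + β * n) ^ 2 ≤ α * β) :
    α * m + β * n ≤ min ((1 + √(1 - 4 * m * n * k)) / (2 * m * k)) 1 := by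
  have hm : 0 < m := by linarith
  have hmk : 0 < m * k := by positivity
  apply le_min
  · rw [le_div_iff₀ (by positivity)]
    set p := α * m + β * n with hp
    have hs := Real.sqrt_nonneg (1 - 4 * m * n * k)
    rcases le_or_gt p (2 * n) with h2 | h2
    · nlinarith
    · have h5 : m * k * p ^ 2 - p + n ≤ 0 := by
        have e : m * (α * β) = β * (p - β * n) := by rw [hp]; ring
        have : 0 ≤ (1 - β) * (p - n * (1 + β)) :=
          mul_nonneg (by linarith) (by nlinarith)
        nlinarith
      have h6 : 2 * m * k * p - 1 ≤ √(1 - 4 * m * n * k) := by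
        apply Real.le_sqrt_of_sq_le
        nlinarith
      linarith
  · nlinarith

lemma aux_lower (m n k : ℝ) (hn : 0 < n) (hmn : n ≤ m) (hsum : m + n = 1) (hk : 0 < k)
    (h4 : 4 * m * n * k ≤ 1) : ∃ α β : ℝ, 0 < α ∧ α ≤ 1 ∧ 0 < β ∧ β ≤ 1 ∧
    α * m + β * n = min ((1 + √(1 - 4 * m * n * k)) / (2 * m * k)) 1 ∧
    k * (α * m + β * n) ^ 2 ≤ α * β := by
  have hm : 0 < m := by linarith
  have hmk : 0 < m * k := by positivity
  have hs := Real.sqrt_nonneg (1 - 4 * m * n * k)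
  have hs2 := Real.sq_sqrt (show 0 ≤ 1 - 4 * m * n * k by linarith)
  set R := √(1 - 4 * m * n * k) with hR
  set q := (1 + R) / (2 * m * k) with hq
  have hq0 : 0 < q := by positivity
  have hq1 : 2 * m * k * q = 1 + R := by rw [hq]; field_simp
  have hq2 : m * k * q ^ 2 - q + n = 0 := by
    have : (m * k) * (m * k * q ^ 2 - q + n) = 0 := by
      have e : R = 2 * m * k * q - 1 := by linarith
      rw [e] at hs2; nlinarith
    rcases mul_eq_zero.1 this with h | h
    · exact absurd h hmk.ne'
    · exact h
  rcases le_or_gt q 1 with h | h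
  · have hqn : q - n = m * (k * q ^ 2) := by linarith
    have e : (q - n) / m = k * q ^ 2 := by rw [hqn]; field_simp
    refine ⟨(q - n) / m, 1, ?_, ?_, one_pos, le_rfl, ?_, ?_⟩
    · rw [e]; positivity
    · rw [div_le_one hm]; linarith
    · rw [min_eq_left h]; field_simp; ring
    · have : (q - n) / m * m + 1 * n = q := by field_simp; ring
      rw [this, e]; linarith
  · refine ⟨1, 1, one_pos, le_rfl, one_pos, le_rfl, ?_, ?_⟩
    · rw [min_eq_right h.le]; linarith
    · have : (1:ℝ) * m + 1 * n = 1 := by linarith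
      rw [this]
      by_contra hc
      have hk1 : 1 < k := by linarith
      -- quadratic at q : m k q^2 - q + n > m q^2 - q + n = (q-1)(m q - n)
      have : 0 ≤ (q - 1) * (m * q - n) := mul_nonneg (by linarith) (by nlinarith)
      have : 0 < (k - 1) * (m * q ^ 2) := mul_pos (by linarith) (by positivity)
      nlinarith

lemma aux_half (P Q t : ℝ) (h : t ^ 2 ≤ P ^ 2 + Q ^ 2) :
    ∃ C S : ℝ, C ^ 2 + S ^ 2 = 1 ∧ P * (C ^ 2 - S ^ 2) + Q * (2 * C * S) = t := by
  have key : ∃ c s : ℝ, c ^ 2 + s ^ 2 = 1 ∧ P * c + Q * s = t := by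
    rcases eq_or_ne (P ^ 2 + Q ^ 2) 0 with h0 | h0
    · have hP : P = 0 := by nlinarith [sq_nonneg P, sq_nonneg Q]
      have hQ : Q = 0 := by nlinarith [sq_nonneg P, sq_nonneg Q]
      have ht : t = 0 := by nlinarith [sq_nonneg t]
      exact ⟨1, 0, by norm_num, by simp [hP, hQ, ht]⟩
    · have hs2 := Real.sq_sqrt (show 0 ≤ P ^ 2 + Q ^ 2 - t ^ 2 by linarith)
      set W := √(P ^ 2 + Q ^ 2 - t ^ 2)
      refine ⟨(t * P - Q * W) / (P ^ 2 + Q ^ 2), (t * Q + P * W) / (P ^ 2 + Q ^ 2), ?_, ?_⟩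
      · rw [div_pow, div_pow, ← add_div, div_eq_one_iff_eq (by positivity)]
        linear_combination (P ^ 2 + Q ^ 2) * hs2
      · field_simp; ring
  obtain ⟨c, s, hcs, hPQ⟩ := key
  obtain ⟨z, hz⟩ := IsAlgClosed.exists_pow_nat_eq (⟨c, s⟩ : ℂ) (n := 2) (by norm_num)
  have hre : z.re ^ 2 - z.im ^ 2 = c := by
    have := congrArg Complex.re hz; simp [pow_two] at this; linarith
  have him : 2 * z.re * z.im = s := by
    have := congrArg Complex.im hz; simp [pow_two] at this; linarith
  refine ⟨z.re, z.im, ?_, by rw [hre, him]; exact hPQ⟩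
  have : (z.re ^ 2 + z.im ^ 2) ^ 2 = 1 ^ 2 := by
    rw [← hcs.trans (one_pow 2).symm, ← hre, ← him]; ring
  exact (pow_left_inj₀ (by positivity) (by norm_num) (by norm_num)).1 this

/-- construct real Kraus amplitudes -/
lemma aux_construct (x y α β g w : ℝ) (hα : 0 < α)
    (hg : g ^ 2 ≤ α * β) 
    (hw : x * y * g ^ 2 ≤ w * (α * x + β * y - w)) :
    ∃ a b c d : ℝ, a ^ 2 + d ^ 2 = α ∧ b ^ 2 + c ^ 2 = β ∧ a * b + c * d = g ∧
      a ^ 2 * x + c ^ 2 * y = w := by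
  have hA := Real.sq_sqrt hα.le
  have hA0 : 0 < √α := Real.sqrt_pos.2 hα
  set u := √α
  have hge : g ^ 2 / α ≤ β := by rw [div_le_iff₀ hα]; linarith
  have hE := Real.sq_sqrt (show 0 ≤ β - g ^ 2 / α by linarith)
  set e := √(β - g ^ 2 / α)
  obtain ⟨f, hf⟩ : ∃ f, f = g / u := ⟨_, rfl⟩
  have hfu : f * u = g := by rw [hf]; field_simp
  have hfe : f ^ 2 + e ^ 2 = β := by rw [hE, hf, div_pow, hA]; ring
  clear_value u e
  subst hfu
  subst hfe
  subst hA
  -- w1 = (u,0), (b,c) = (f,e); rotate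
  -- a = u C, d = u S, b = f C - e S, c = f S + e C
  obtain ⟨C, S, h1, h2⟩ := aux_half (u ^ 2 * x + (e ^ 2 - f ^ 2) * y) (2 * e * f * y)
    (2 * w - (u ^ 2 * x + (f ^ 2 + e ^ 2) * y)) (by nlinarith)
  refine ⟨u * C, f * C - e * S, f * S + e * C, u * S, ?_, ?_, ?_, ?_⟩
  · linear_combination u ^ 2 * h1
  · linear_combination (f ^ 2 + e ^ 2) * h1
  · linear_combination f * u * h1
  · linear_combination h2 / 2 + (u ^ 2 * x + (f ^ 2 + e ^ 2) * y) / 2 * h1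

lemma aux_entries (rx ry rz : ℝ) (K : Matrix (Fin 2) (Fin 2) ℂ) (h : IsSIKraus K) :
    ((K * blochState rx ry rz * Kᴴ) 0 0).re =
      ‖K 0 0‖ ^ 2 * ((1 + rz) / 2) + ‖K 0 1‖ ^ 2 * ((1 - rz) / 2) ∧
    ((K * blochState rx ry rz * Kᴴ) 1 1).re =
      ‖K 1 0‖ ^ 2 * ((1 + rz) / 2) + ‖K 1 1‖ ^ 2 * ((1 - rz) / 2) ∧
    ‖(K * blochState rx ry rz * Kᴴ) 0 1‖ ≤
      (‖K 0 0‖ * ‖K 1 1‖ + ‖K 0 1‖ * ‖K 1 0‖) * (√(rx ^ 2 + ry ^ 2) / 2) := by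
  obtain ⟨h1, h2⟩ := h
  have e1 : K 0 0 = 0 ∨ K 0 1 = 0 := by
    by_contra hc; push Not at hc; exact absurd (h1 0 0 1 hc.1 hc.2) (by decide)
  have e2 : K 1 0 = 0 ∨ K 1 1 = 0 := by
    by_contra hc; push Not at hc; exact absurd (h1 1 0 1 hc.1 hc.2) (by decide)
  have e3 : K 0 0 = 0 ∨ K 1 0 = 0 := by
    by_contra hc; push Not at hc; exact absurd (h2 0 0 1 hc.1 hc.2) (by decide)
  have e4 : K 0 1 = 0 ∨ K 1 1 = 0 := by
    by_contra hc; push Not at hc; exact absurd (h2 1 0 1 hc.1 hc.2) (by decide)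
  have n1 : ‖((rx : ℂ) - ry * Complex.I) / 2‖ = √(rx ^ 2 + ry ^ 2) / 2 := by
    rw [norm_div, Complex.norm_def, Complex.normSq_apply]; simp [pow_two]
  have n2 : ‖((rx : ℂ) + ry * Complex.I) / 2‖ = √(rx ^ 2 + ry ^ 2) / 2 := by
    rw [norm_div, Complex.norm_def, Complex.normSq_apply]; simp [pow_two]
  have sq : ∀ z : ℂ, ‖z‖ ^ 2 = z.re * z.re + z.im * z.im := fun z => by
    rw [← Complex.normSq_eq_norm_sq, Complex.normSq_apply]
  refine ⟨?_, ?_, ?_⟩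
  · rw [sq, sq]
    simp only [Matrix.mul_apply, Fin.sum_univ_two, Matrix.conjTranspose_apply, blochState]
    rcases e1 with h | h <;> simp [h] <;> ring
  · rw [sq, sq]
    simp only [Matrix.mul_apply, Fin.sum_univ_two, Matrix.conjTranspose_apply, blochState]
    rcases e2 with h | h <;> simp [h] <;> ring
  · have : (K * blochState rx ry rz * Kᴴ) 0 1 =
        K 0 0 * (((rx : ℂ) - ry * Complex.I) / 2) * star (K 1 1) +
        K 0 1 * (((rx : ℂ) + ry * Complex.I) / 2) * star (K 1 0) := by
      simp only [Matrix.mul_apply, Fin.sum_univ_two, Matrix.conjTranspose_apply, blochState]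
      rcases e3 with h | h <;> rcases e4 with h' | h' <;> simp [h, h']
    rw [this]
    refine (norm_add_le _ _).trans (le_of_eq ?_)
    rw [norm_mul, norm_mul, norm_mul, norm_mul, n1, n2, norm_star, norm_star]
    ring

lemma aux_necessary (rx ry rz sx sy sz p : ℝ) (hp : 0 ≤ p) (hz1 : 0 ≤ 1 + rz) (hz2 : 0 ≤ 1 - rz)
    (N : ℕ) (K : Fin N → Matrix (Fin 2) (Fin 2) ℂ) (hK : ∀ i, IsSIKraus (K i))
    (hI : ((1 : Matrix (Fin 2) (Fin 2) ℂ) - ∑ i, (K i)ᴴ * K i).PosSemidef)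
    (hE : ∑ i, K i * blochState rx ry rz * (K i)ᴴ = (p : ℂ) • blochState sx sy sz) :
    (∃ α β : ℝ, 0 ≤ α ∧ α ≤ 1 ∧ 0 ≤ β ∧ β ≤ 1 ∧
      p = α * ((1 + rz) / 2) + β * ((1 - rz) / 2) ∧
      (sx ^ 2 + sy ^ 2) * p ^ 2 ≤ (rx ^ 2 + ry ^ 2) * (α * β)) ∧
    (1 - rz ^ 2) * (sx ^ 2 + sy ^ 2) * p ^ 2 ≤ (rx ^ 2 + ry ^ 2) * ((1 - sz ^ 2) * p ^ 2) := by
  obtain ⟨A, hA⟩ : ∃ A, A = ∑ i, ‖K i 0 0‖ ^ 2 := ⟨_, rfl⟩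
  obtain ⟨B, hB⟩ : ∃ B, B = ∑ i, ‖K i 1 1‖ ^ 2 := ⟨_, rfl⟩
  obtain ⟨C, hC⟩ : ∃ C, C = ∑ i, ‖K i 0 1‖ ^ 2 := ⟨_, rfl⟩
  obtain ⟨D, hD⟩ : ∃ D, D = ∑ i, ‖K i 1 0‖ ^ 2 := ⟨_, rfl⟩
  obtain ⟨t1, ht1⟩ : ∃ t, t = ∑ i, ‖K i 0 0‖ * ‖K i 1 1‖ := ⟨_, rfl⟩
  obtain ⟨t2, ht2⟩ : ∃ t, t = ∑ i, ‖K i 0 1‖ * ‖K i 1 0‖ := ⟨_, rfl⟩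
  have A0 : 0 ≤ A := by rw [hA]; positivity
  have B0 : 0 ≤ B := by rw [hB]; positivity
  have C0 : 0 ≤ C := by rw [hC]; positivity
  have D0 : 0 ≤ D := by rw [hD]; positivity
  have t10 : 0 ≤ t1 := by rw [ht1]; positivity
  have t20 : 0 ≤ t2 := by rw [ht2]; positivity
  have c1 : t1 ^ 2 ≤ A * B := by
    rw [ht1, hA, hB]; exact Finset.sum_mul_sq_le_sq_mul_sq _ _ _
  have c2 : t2 ^ 2 ≤ C * D := by
    rw [ht2, hC, hD]; exact Finset.sum_mul_sq_le_sq_mul_sq _ _ _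
  have E00 : A * ((1 + rz) / 2) + C * ((1 - rz) / 2) = p * ((1 + sz) / 2) := by
    have := congrArg Complex.re (congrFun (congrFun hE 0) 0)
    rw [Matrix.sum_apply, Complex.re_sum, Finset.sum_congr rfl (fun i _ => (aux_entries rx ry rz (K i) (hK i)).1),
      Finset.sum_add_distrib, ← Finset.sum_mul, ← Finset.sum_mul, ← hA, ← hC] at this
    rw [this]; simp [blochState]
  have E11 : D * ((1 + rz) / 2) + B * ((1 - rz) / 2) = p * ((1 - sz) / 2) := by
    have := congrArg Complex.re (congrFun (congrFun hE 1) 1)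
    rw [Matrix.sum_apply, Complex.re_sum, Finset.sum_congr rfl (fun i _ => (aux_entries rx ry rz (K i) (hK i)).2.1),
      Finset.sum_add_distrib, ← Finset.sum_mul, ← Finset.sum_mul, ← hD, ← hB] at this
    rw [this]; simp [blochState]
  have E01 : p * (√(sx ^ 2 + sy ^ 2) / 2) ≤ (t1 + t2) * (√(rx ^ 2 + ry ^ 2) / 2) := by
    have := congrArg norm (congrFun (congrFun hE 0) 1)
    have n1 : ‖((p : ℂ) • blochState sx sy sz) 0 1‖ = p * (√(sx ^ 2 + sy ^ 2) / 2) := by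
      have : ((p : ℂ) • blochState sx sy sz) 0 1 = p * (((sx : ℂ) - sy * Complex.I) / 2) := by
        simp [blochState]
      rw [this, norm_mul, norm_div, Complex.norm_def (_ - _), Complex.normSq_apply]
      simp [pow_two, abs_of_nonneg hp]
    rw [n1, Matrix.sum_apply] at this
    rw [← this, ht1, ht2, ← Finset.sum_add_distrib, Finset.sum_mul]
    exact (norm_sum_le _ _).trans (Finset.sum_le_sum fun i _ => (aux_entries rx ry rz (K i) (hK i)).2.2)
  have E01' : (sx ^ 2 + sy ^ 2) * p ^ 2 ≤ (rx ^ 2 + ry ^ 2) * (t1 + t2) ^ 2 := by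
    have h1 : p * √(sx ^ 2 + sy ^ 2) ≤ (t1 + t2) * √(rx ^ 2 + ry ^ 2) := by linarith
    have h2 := pow_le_pow_left₀ (by positivity) h1 2
    rw [mul_pow, mul_pow, Real.sq_sqrt (by positivity), Real.sq_sqrt (by positivity)] at h2
    linarith
  have sq : ∀ z : ℂ, ‖z‖ ^ 2 = z.re * z.re + z.im * z.im := fun z => by
    rw [← Complex.normSq_eq_norm_sq, Complex.normSq_apply]
  have I0 : A + D ≤ 1 := by
    have := (Complex.le_def.1 (hI.diag_nonneg (i := 0))).1
    simp [Matrix.sub_apply, Matrix.sum_apply, Matrix.mul_apply, Finset.sum_add_distrib] at this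
    rw [hA, hD]; simp only [sq, Finset.sum_add_distrib]; linarith
  have I1 : B + C ≤ 1 := by
    have := (Complex.le_def.1 (hI.diag_nonneg (i := 1))).1
    simp [Matrix.sub_apply, Matrix.sum_apply, Matrix.mul_apply, Finset.sum_add_distrib] at this
    rw [hB, hC]; simp only [sq, Finset.sum_add_distrib]; linarith
  have r0 : 0 ≤ rx ^ 2 + ry ^ 2 := by positivity
  constructor
  · refine ⟨A + D, B + C, by positivity, I0, by positivity, I1, by linarith, E01'.trans ?_⟩
    apply mul_le_mul_of_nonneg_left _ r0
    have := aux_cs 1 A B D C t1 t2 zero_le_one A0 B0 D0 C0 t10 t20 (by linarith) (by linarith)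
    linarith
  · have hx0 : 0 ≤ (1 + rz) / 2 := by linarith
    have hy0 : 0 ≤ (1 - rz) / 2 := by linarith
    have := aux_cs ((1 + rz) / 2 * ((1 - rz) / 2)) (A * ((1 + rz) / 2)) (B * ((1 - rz) / 2))
      (C * ((1 - rz) / 2)) (D * ((1 + rz) / 2)) t1 t2 (by positivity) (by positivity) (by positivity)
      (by positivity) (by positivity) t10 t20
      (by nlinarith [mul_le_mul_of_nonneg_left c1 (mul_nonneg hx0 hy0)])
      (by nlinarith [mul_le_mul_of_nonneg_left c2 (mul_nonneg hx0 hy0)])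
    rw [E00, add_comm (B * _), E11] at this
    have h3 : (1 - rz ^ 2) * (t1 + t2) ^ 2 ≤ (1 - sz ^ 2) * p ^ 2 := by linarith
    have h4 : 0 ≤ 1 - rz ^ 2 := by linarith [mul_nonneg hz1 hz2]
    have h5 := mul_le_mul_of_nonneg_left E01' h4
    have h6 := mul_le_mul_of_nonneg_left h3 r0
    linarith

lemma aux_sufficient (rx ry rz sx sy sz p α β : ℝ) (hp : 0 ≤ p)
    (hrc : 0 < rx ^ 2 + ry ^ 2) (hsc : 0 < sx ^ 2 + sy ^ 2)
    (hα0 : 0 < α) (hα : α ≤ 1) (hβ : β ≤ 1)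
    (hpe : p = α * ((1 + rz) / 2) + β * ((1 - rz) / 2))
    (hk : (sx ^ 2 + sy ^ 2) / (rx ^ 2 + ry ^ 2) * p ^ 2 ≤ α * β)
    (hc : (1 - rz ^ 2) * ((sx ^ 2 + sy ^ 2) / (rx ^ 2 + ry ^ 2)) ≤ 1 - sz ^ 2) :
    ∃ (N : ℕ) (K : Fin N → Matrix (Fin 2) (Fin 2) ℂ),
        (∀ i, IsSIKraus (K i)) ∧
        ((1 : Matrix (Fin 2) (Fin 2) ℂ) - ∑ i, (K i)ᴴ * K i).PosSemidef ∧
        ∑ i, K i * blochState rx ry rz * (K i)ᴴ = (p : ℂ) • blochState sx sy sz := by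
  have hk0 : 0 < (sx ^ 2 + sy ^ 2) / (rx ^ 2 + ry ^ 2) := by positivity
  have hkappa := Real.sq_sqrt hk0.le
  have hkappa0 := Real.sqrt_pos.2 hk0
  obtain ⟨κ, hκ⟩ : ∃ κ, κ = √((sx ^ 2 + sy ^ 2) / (rx ^ 2 + ry ^ 2)) := ⟨_, rfl⟩
  rw [← hκ] at hkappa hkappa0
  obtain ⟨a, b, c, d, h1, h2, h3, h4⟩ := aux_construct ((1 + rz) / 2) ((1 - rz) / 2) α β (κ * p)
    (p * ((1 + sz) / 2)) hα0 (by rw [mul_pow, hkappa]; exact hk)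
    (by rw [← hpe, mul_pow, hkappa]; nlinarith [mul_le_mul_of_nonneg_right hc (sq_nonneg p)])
  have h5 : b ^ 2 * ((1 - rz) / 2) + d ^ 2 * ((1 + rz) / 2) = p * ((1 - sz) / 2) := by
    rw [← h1, ← h2] at hpe; linarith
  obtain ⟨ρ, hρ⟩ : ∃ ρ : ℂ, ρ = ((rx : ℂ) - ry * Complex.I) / 2 := ⟨_, rfl⟩
  obtain ⟨ρ', hρ'⟩ : ∃ ρ : ℂ, ρ = ((rx : ℂ) + ry * Complex.I) / 2 := ⟨_, rfl⟩
  obtain ⟨τ, hτ⟩ : ∃ ρ : ℂ, ρ = ((sx : ℂ) - sy * Complex.I) / 2 := ⟨_, rfl⟩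
  obtain ⟨τ', hτ'⟩ : ∃ ρ : ℂ, ρ = ((sx : ℂ) + sy * Complex.I) / 2 := ⟨_, rfl⟩
  have sρ : star ρ = ρ' := by rw [hρ, hρ']; simp [sub_eq_add_neg]
  have sρ' : star ρ' = ρ := by rw [← sρ, star_star]
  have sτ : star τ = τ' := by rw [hτ, hτ']; simp [sub_eq_add_neg]
  have mρ : ρ * ρ' = ((rx ^ 2 + ry ^ 2 : ℝ) : ℂ) / 4 := by
    rw [hρ, hρ']; push_cast; linear_combination (-(ry : ℂ) ^ 2 / 4) * Complex.I_sq
  have mτ : τ * τ' = ((sx ^ 2 + sy ^ 2 : ℝ) : ℂ) / 4 := by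
    rw [hτ, hτ']; push_cast; linear_combination (-(sy : ℂ) ^ 2 / 4) * Complex.I_sq
  have hrC : ((rx ^ 2 + ry ^ 2 : ℝ) : ℂ) ≠ 0 := by exact_mod_cast hrc.ne'
  have hρ0 : ρ ≠ 0 := by
    rintro rfl; rw [zero_mul] at mρ; exact hrC (by linear_combination -4 * mρ)
  have hρ0' : ρ' ≠ 0 := by
    rintro rfl; rw [mul_zero] at mρ; exact hrC (by linear_combination -4 * mρ)
  have hκC : (κ : ℂ) ≠ 0 := by exact_mod_cast hkappa0.ne'
  have hκ2 : (κ : ℂ) ^ 2 * (ρ * ρ') = τ * τ' := by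
    have : κ ^ 2 * (rx ^ 2 + ry ^ 2) = sx ^ 2 + sy ^ 2 := by rw [hkappa]; field_simp
    rw [mρ, mτ, ← this]; push_cast; ring
  obtain ⟨ε, hε⟩ : ∃ ε : ℂ, ε = τ / (ρ * κ) := ⟨_, rfl⟩
  obtain ⟨ε', hε'⟩ : ∃ ε : ℂ, ε = τ / (ρ' * κ) := ⟨_, rfl⟩
  have uε : ε * star ε = 1 := by
    rw [hε, star_div₀, star_mul', sρ, sτ]
    simp only [Complex.star_def, Complex.conj_ofReal]
    field_simp; linear_combination -hκ2
  have uε' : ε' * star ε' = 1 := by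
    rw [hε', star_div₀, star_mul', sρ', sτ]
    simp only [Complex.star_def, Complex.conj_ofReal]
    field_simp; linear_combination -hκ2
  have pε : ε * ρ * κ = τ := by rw [hε]; field_simp
  have pε' : ε' * ρ' * κ = τ := by rw [hε']; field_simp
  have qε : star ε * ρ' * κ = τ' := by
    rw [← sτ, ← sρ, ← pε]; simp
  have qε' : star ε' * ρ * κ = τ' := by
    rw [← sτ, ← sρ', ← pε']; simp
  have h3C : (a : ℂ) * b + c * d = κ * p := by exact_mod_cast h3
  have h4C : (a : ℂ) ^ 2 * ((1 + rz) / 2) + c ^ 2 * ((1 - rz) / 2) = p * ((1 + sz) / 2) := by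
    exact_mod_cast h4
  have h5C : (b : ℂ) ^ 2 * ((1 - rz) / 2) + d ^ 2 * ((1 + rz) / 2) = p * ((1 - sz) / 2) := by
    exact_mod_cast h5
  refine ⟨2, ![!![a * ε, 0; 0, b], !![0, c * ε'; d, 0]], ?_, ?_, ?_⟩
  · intro i
    fin_cases i
    · constructor <;> intro i j k <;> fin_cases i <;> fin_cases j <;> fin_cases k <;> simp
    · constructor <;> intro i j k <;> fin_cases i <;> fin_cases j <;> fin_cases k <;> simp
  · have : (1 : Matrix (Fin 2) (Fin 2) ℂ) - ∑ i, ((![!![a * ε, 0; 0, b], !![0, c * ε'; d, 0]] :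
        Fin 2 → Matrix (Fin 2) (Fin 2) ℂ) i)ᴴ *
        (![!![a * ε, 0; 0, b], !![0, c * ε'; d, 0]] : Fin 2 → Matrix (Fin 2) (Fin 2) ℂ) i =
        Matrix.diagonal ![((1 - α : ℝ) : ℂ), ((1 - β : ℝ) : ℂ)] := by
      simp only [Complex.star_def] at uε uε'
      rw [← h1, ← h2]
      ext i j
      fin_cases i <;> fin_cases j <;>
        simp [Fin.sum_univ_two, Matrix.mul_apply]
      · linear_combination ((a : ℂ) ^ 2) * uε
      · linear_combination ((c : ℂ) ^ 2) * uε'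
    rw [this]
    apply Matrix.PosSemidef.diagonal
    intro i
    fin_cases i
    · simp; exact_mod_cast hα
    · simp; exact_mod_cast hβ
  · have hb : ∀ z w v, blochState z w v = !![(1 + v : ℂ)/2, ((z : ℂ) - w * Complex.I)/2;
     ((z : ℂ) + w * Complex.I)/2, (1 - v : ℂ)/2] := fun _ _ _ => rfl
    rw [hb, hb, ← hρ, ← hρ', ← hτ, ← hτ']
    simp only [Complex.star_def] at uε uε' qε qε'
    ext i j
    fin_cases i <;> fin_cases j <;>
      simp [Fin.sum_univ_two, Matrix.vecMul, dotProduct, Matrix.conjTranspose_apply]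
    · linear_combination h4C + (a : ℂ) ^ 2 * ((1 + rz) / 2) * uε + (c : ℂ) ^ 2 * ((1 - rz) / 2) * uε'
    · apply mul_right_cancel₀ hκC
      linear_combination τ * h3C + a * b * pε + c * d * pε'
    · apply mul_right_cancel₀ hκC
      linear_combination τ' * h3C + a * b * qε + c * d * qε'
    · linear_combination h5C

/-- The optimal probability of converting a coherent qubit state `ρ` into a coherent
qubit state `σ` via stochastic (strictly) incoherent operations. -/
theorem optimal_sio_conversion_probability
    (rx ry rz sx sy sz : ℝ)
    (hr : rx ^ 2 + ry ^ 2 + rz ^ 2 ≤ 1) (hs : sx ^ 2 + sy ^ 2 + sz ^ 2 ≤ 1)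
    (hrc : 0 < rx ^ 2 + ry ^ 2) (hsc : 0 < sx ^ 2 + sy ^ 2)
    (S : Set ℝ)
    (hS : S = {p : ℝ | 0 ≤ p ∧
      ∃ (N : ℕ) (K : Fin N → Matrix (Fin 2) (Fin 2) ℂ),
        (∀ i, IsSIKraus (K i)) ∧
        ((1 : Matrix (Fin 2) (Fin 2) ℂ) - ∑ i, (K i)ᴴ * K i).PosSemidef ∧
        ∑ i, K i * blochState rx ry rz * (K i)ᴴ = (p : ℂ) • blochState sx sy sz}) :
    ((rx ^ 2 + ry ^ 2) * sz ^ 2 + (1 - rz ^ 2) * (sx ^ 2 + sy ^ 2) > rx ^ 2 + ry ^ 2 →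
      sSup S = 0) ∧
    ((rx ^ 2 + ry ^ 2) * sz ^ 2 + (1 - rz ^ 2) * (sx ^ 2 + sy ^ 2) ≤ rx ^ 2 + ry ^ 2 →
      sSup S = min ((rx ^ 2 + ry ^ 2) / ((1 + |rz|) * (sx ^ 2 + sy ^ 2)) *
          (1 + Real.sqrt (1 - (sx ^ 2 + sy ^ 2) * (1 - rz ^ 2) / (rx ^ 2 + ry ^ 2)))) 1 ∧
      sSup S ∈ S) := by
  have hz : rz ^ 2 < 1 := by nlinarith
  obtain ⟨hz1, hz2⟩ := abs_lt.1 ((sq_lt_one_iff_abs_lt_one rz).1 hz)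
  have hmem : ∀ p ∈ S, 0 ≤ p ∧ (∃ α β : ℝ, 0 ≤ α ∧ α ≤ 1 ∧ 0 ≤ β ∧ β ≤ 1 ∧
      p = α * ((1 + rz) / 2) + β * ((1 - rz) / 2) ∧
      (sx ^ 2 + sy ^ 2) * p ^ 2 ≤ (rx ^ 2 + ry ^ 2) * (α * β)) ∧
    (1 - rz ^ 2) * (sx ^ 2 + sy ^ 2) * p ^ 2 ≤ (rx ^ 2 + ry ^ 2) * ((1 - sz ^ 2) * p ^ 2) := by
    intro p hp
    rw [hS] at hp
    obtain ⟨hp, N, K, hK, hI, hE⟩ := hp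
    exact ⟨hp, aux_necessary rx ry rz sx sy sz p hp (by linarith) (by linarith) N K hK hI hE⟩
  constructor
  · intro hgt
    have : S = {0} := by
      apply Set.eq_singleton_iff_unique_mem.2
      constructor
      · rw [hS]
        refine ⟨le_rfl, 0, ![], fun i => i.elim0, ?_, by simp⟩
        simpa using Matrix.PosSemidef.one
      · intro p hp
        have h := (hmem p hp).2.2
        by_contra hne
        have : 0 < p ^ 2 := by positivity
        nlinarith
    rw [this, csSup_singleton]
  · intro hle
    obtain ⟨k, hk⟩ : ∃ k, k = (sx ^ 2 + sy ^ 2) / (rx ^ 2 + ry ^ 2) := ⟨_, rfl⟩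
    have hk0 : 0 < k := by rw [hk]; positivity
    have hkr : k * (rx ^ 2 + ry ^ 2) = sx ^ 2 + sy ^ 2 := by rw [hk]; field_simp
    have hc : (1 - rz ^ 2) * k ≤ 1 - sz ^ 2 := by
      rw [← hkr] at hle
      by_contra hcc
      push Not at hcc
      nlinarith [mul_lt_mul_of_pos_right hcc hrc]
    have habs2 : |rz| ^ 2 = rz ^ 2 := sq_abs rz
    have habs0 := abs_nonneg rz
    have habs1 : |rz| < 1 := abs_lt.2 ⟨hz1, hz2⟩
    have h4 : 4 * ((1 + |rz|) / 2) * ((1 - |rz|) / 2) * k = (1 - rz ^ 2) * k := by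
      rw [← habs2]; ring
    have h41 : 4 * ((1 + |rz|) / 2) * ((1 - |rz|) / 2) * k ≤ 1 := by
      rw [h4]; nlinarith [sq_nonneg sz]
    have hform : (rx ^ 2 + ry ^ 2) / ((1 + |rz|) * (sx ^ 2 + sy ^ 2)) *
          (1 + Real.sqrt (1 - (sx ^ 2 + sy ^ 2) * (1 - rz ^ 2) / (rx ^ 2 + ry ^ 2))) =
        (1 + √(1 - 4 * ((1 + |rz|) / 2) * ((1 - |rz|) / 2) * k)) / (2 * ((1 + |rz|) / 2) * k) := by
      rw [h4]
      have : (sx ^ 2 + sy ^ 2) * (1 - rz ^ 2) / (rx ^ 2 + ry ^ 2) = (1 - rz ^ 2) * k := by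
        rw [hk]; ring
      rw [this, ← hkr]
      field_simp
    rw [hform]
    set M := min ((1 + √(1 - 4 * ((1 + |rz|) / 2) * ((1 - |rz|) / 2) * k)) /
      (2 * ((1 + |rz|) / 2) * k)) 1 with hM
    have hub : ∀ p ∈ S, p ≤ M := by
      intro p hp
      obtain ⟨hp0, ⟨α, β, hα0, hα, hβ0, hβ, hpe, hh⟩, -⟩ := hmem p hp
      have hh' : k * p ^ 2 ≤ α * β := by
        rw [← hkr] at hh
        by_contra hcc
        push Not at hcc
        nlinarith [mul_lt_mul_of_pos_right hcc hrc]
      rcases le_total 0 rz with h | h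
      · rw [hM]
        have hp' : p = α * ((1 + |rz|) / 2) + β * ((1 - |rz|) / 2) := by rw [abs_of_nonneg h, hpe]
        rw [hp'] at hh' ⊢
        exact aux_upper _ _ k α β (by linarith) (by linarith) (by ring) hk0 h41 hα0 hα hβ0 hβ hh'
      · rw [hM]
        have hp' : p = β * ((1 + |rz|) / 2) + α * ((1 - |rz|) / 2) := by
          rw [abs_of_nonpos h, hpe]; ring
        rw [hp', mul_comm α β] at hh'
        rw [hp']
        exact aux_upper _ _ k β α (by linarith) (by linarith) (by ring) hk0 h41 hβ0 hβ hα0 hα hh'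
    have hin : M ∈ S := by
      obtain ⟨α, β, hα0, hα, hβ0, hβ, hpe, hh⟩ := aux_lower ((1 + |rz|) / 2) ((1 - |rz|) / 2) k
        (by linarith) (by linarith) (by ring) hk0 h41
      rw [hpe] at hh
      rw [← hM] at hpe hh
      have hM0 : 0 ≤ M := by
        rw [← hpe]
        have : 0 < 1 - |rz| := by linarith
        positivity
      rw [hS]
      refine ⟨hM0, ?_⟩
      rcases le_total 0 rz with h | h
      · rw [abs_of_nonneg h] at hpe
        exact aux_sufficient rx ry rz sx sy sz M α β hM0 hrc hsc hα0 hα hβ hpe.symm (hk ▸ hh) (hk ▸ hc)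
      · rw [abs_of_nonpos h] at hpe
        exact aux_sufficient rx ry rz sx sy sz M β α hM0 hrc hsc hβ0 hβ hα (by linarith)
          (by rw [mul_comm β α]; exact hk ▸ hh) (hk ▸ hc)
    have : sSup S = M := IsGreatest.csSup_eq ⟨hin, hub⟩
    exact ⟨this, this ▸ hin⟩
end

section
/- Let ρ and σ be qubit density matrices with Bloch vectors (r_x,r_y,r_z) and (s_x,s_y,s_z), and write r = √(r_x²+r_y²), s = √(s_x²+s_y²). There exists a finite family (K_i) of strictly incoherent 2×2 Kraus operators with ∑_i K_iᴴK_i = I and ∑_i K_i ρ K_iᴴ = σ (deterministic incoherent conversion of ρ into σ) if and only if r²·s_z² + (1−r_z²)·s² ≤ r² and s ≤ r. -/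
open Matrix BigOperators
open scoped Kronecker Classical ComplexOrder

theorem aux_unit (m g h : ℝ) (H : m ^ 2 ≤ g ^ 2 + h ^ 2) :
    ∃ S : ℝ, Real.sin S * g + Real.cos S * h = m := by
  have key : ∃ x y : ℝ, x ^ 2 + y ^ 2 = 1 ∧ x * g + y * h = m := by
    by_cases hn : g ^ 2 + h ^ 2 = 0
    · have hm : m = 0 := by nlinarith
      have hg : g = 0 := by nlinarith [sq_nonneg h, sq_nonneg g]
      have hh : h = 0 := by nlinarith [sq_nonneg h, sq_nonneg g]
      exact ⟨0, 1, by norm_num, by rw [hm, hg, hh]; ring⟩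
    · have hk : Real.sqrt (g ^ 2 + h ^ 2 - m ^ 2) ^ 2 = g ^ 2 + h ^ 2 - m ^ 2 :=
        Real.sq_sqrt (by linarith)
      set k := Real.sqrt (g ^ 2 + h ^ 2 - m ^ 2)
      refine ⟨(m * g - k * h) / (g ^ 2 + h ^ 2), (m * h + k * g) / (g ^ 2 + h ^ 2), ?_, ?_⟩
      · field_simp
        linear_combination (g ^ 2 + h ^ 2) * hk
      · field_simp
        ring
  obtain ⟨x, y, hxy, he⟩ := key
  have hne : ‖(⟨y, x⟩ : ℂ)‖ = 1 := by
    have h1 : ‖(⟨y, x⟩ : ℂ)‖ ^ 2 = 1 := by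
      rw [← Complex.normSq_eq_norm_sq, Complex.normSq_mk]; linarith
    nlinarith [norm_nonneg (⟨y, x⟩ : ℂ)]
  have h0 : (⟨y, x⟩ : ℂ) ≠ 0 := by
    intro h; rw [h] at hne; simp at hne
  refine ⟨Complex.arg ⟨y, x⟩, ?_⟩
  rw [Complex.sin_arg, Complex.cos_arg h0, hne]
  simpa using he

theorem aux_polar (z : ℂ) : ∃ e : ℂ, e * star e = 1 ∧ z = (‖z‖ : ℂ) * e := by
  by_cases h : z = 0
  · exact ⟨1, by simp, by simp [h]⟩
  · have hn : (‖z‖ : ℂ) ≠ 0 := by simpa using h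
    refine ⟨z / ‖z‖, ?_, by field_simp⟩
    have : z * star z = (‖z‖ : ℂ) ^ 2 := Complex.mul_conj' z
    rw [star_div₀]
    have h2 : star (‖z‖ : ℂ) = ‖z‖ := Complex.conj_ofReal _
    rw [h2, div_mul_div_comm, this]
    field_simp

theorem aux_real (A B z r s m : ℝ) (hA : 0 ≤ A) (hB : 0 ≤ B) (hA1 : A ≤ 1) (hB1 : B ≤ 1)
    (hz : z ^ 2 ≤ 1) (hr : 0 ≤ r) (hs : 0 ≤ s)
    (hm : m = A * (1 + z) + (1 - B) * (1 - z) - 1)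
    (h : s ≤ r * (√A * √B + √(1 - B) * √(1 - A))) :
    r ^ 2 * m ^ 2 + (1 - z ^ 2) * s ^ 2 ≤ r ^ 2 ∧ s ≤ r := by
  have hu := Real.sq_sqrt hA
  have hv := Real.sq_sqrt hB
  have hw := Real.sq_sqrt (sub_nonneg.2 hA1)
  have ht := Real.sq_sqrt (sub_nonneg.2 hB1)
  have pu := Real.sqrt_nonneg A
  have pv := Real.sqrt_nonneg B
  have pw := Real.sqrt_nonneg (1 - A)
  have pt := Real.sqrt_nonneg (1 - B)
  set u := √A
  set v := √B
  set w := √(1 - A)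
  set t := √(1 - B)
  have hF : 0 ≤ u * v + t * w := by positivity
  have huw : u ^ 2 + w ^ 2 = 1 := by linarith
  have hvt : v ^ 2 + t ^ 2 = 1 := by linarith
  have hD : (u * v + t * w) ^ 2 + (u * t - w * v) ^ 2 = 1 := by
    linear_combination (v ^ 2 + t ^ 2) * huw + hvt
  have hS : (u * v - t * w) ^ 2 + (u * t + w * v) ^ 2 = 1 := by
    linear_combination (v ^ 2 + t ^ 2) * huw + hvt
  have hm' : m = (u * t + w * v) * (u * t - w * v) + z * ((u * v - t * w) * (u * v + t * w)) := by
    have e1 : A = u ^ 2 := hu.symm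
    have e2 : B = v ^ 2 := hv.symm
    have e3 : w ^ 2 = 1 - u ^ 2 := by linarith
    have e4 : t ^ 2 = 1 - v ^ 2 := by linarith
    rw [hm, e1, e2]
    linear_combination (v ^ 2 + z * t ^ 2) * e3 + (-u ^ 2 + z * (1 - u ^ 2)) * e4
  set F := u * v + t * w
  set G := u * t - w * v
  set P := u * v - t * w
  set Q := u * t + w * v
  have hF1 : F ≤ 1 := by nlinarith [sq_nonneg G]
  have hm2 : m ^ 2 ≤ G ^ 2 + z ^ 2 * F ^ 2 := by
    have : G ^ 2 + z ^ 2 * F ^ 2 - m ^ 2 = (Q * (z * F) - P * G) ^ 2 := by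
      rw [hm']; linear_combination (-(G ^ 2 + z ^ 2 * F ^ 2)) * hS
    nlinarith [sq_nonneg (Q * (z * F) - P * G)]
  have hs2 : s ^ 2 ≤ r ^ 2 * F ^ 2 := by
    rw [← mul_pow]; exact pow_le_pow_left₀ hs h 2
  constructor
  · have h1 : (1 - z ^ 2) * s ^ 2 ≤ (1 - z ^ 2) * (r ^ 2 * F ^ 2) :=
      mul_le_mul_of_nonneg_left hs2 (by linarith)
    have h2 : r ^ 2 * m ^ 2 ≤ r ^ 2 * (G ^ 2 + z ^ 2 * F ^ 2) :=
      mul_le_mul_of_nonneg_left hm2 (by positivity)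
    have h3 : r ^ 2 * (G ^ 2 + z ^ 2 * F ^ 2) + (1 - z ^ 2) * (r ^ 2 * F ^ 2) = r ^ 2 := by
      linear_combination r ^ 2 * hD
    linarith
  · nlinarith

theorem aux_norm (x y : ℝ) : ‖((x : ℂ) - y * Complex.I) / 2‖ = √(x ^ 2 + y ^ 2) / 2 := by
  rw [norm_div]
  have : (x : ℂ) - y * Complex.I = (x : ℝ) + ((-y : ℝ) : ℂ) * Complex.I := by push_cast; ring
  rw [this, Complex.norm_add_mul_I]
  simp

theorem aux_norm' (x y : ℝ) : ‖((x : ℂ) + y * Complex.I) / 2‖ = √(x ^ 2 + y ^ 2) / 2 := by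
  rw [norm_div, Complex.norm_add_mul_I]
  simp

theorem aux_nec (rx ry rz sx sy sz : ℝ)
    (hr : rx ^ 2 + ry ^ 2 + rz ^ 2 ≤ 1)
    (N : ℕ) (K : Fin N → Matrix (Fin 2) (Fin 2) ℂ)
    (hK : ∀ i, IsSIKraus (K i)) (h1 : ∑ i, (K i)ᴴ * K i = 1)
    (h2 : ∑ i, K i * blochState rx ry rz * (K i)ᴴ = blochState sx sy sz) :
    ((rx ^ 2 + ry ^ 2) * sz ^ 2 + (1 - rz ^ 2) * (sx ^ 2 + sy ^ 2) ≤ rx ^ 2 + ry ^ 2 ∧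
      Real.sqrt (sx ^ 2 + sy ^ 2) ≤ Real.sqrt (rx ^ 2 + ry ^ 2)) := by
  have hac : ∀ i, K i 0 0 = 0 ∨ K i 0 1 = 0 := fun i => by
    by_contra hh; push Not at hh
    exact absurd ((hK i).1 0 0 1 hh.1 hh.2) (by decide)
  have had : ∀ i, K i 0 0 = 0 ∨ K i 1 0 = 0 := fun i => by
    by_contra hh; push Not at hh
    exact absurd ((hK i).2 0 0 1 hh.1 hh.2) (by decide)
  have hbc : ∀ i, K i 1 1 = 0 ∨ K i 0 1 = 0 := fun i => by
    by_contra hh; push Not at hh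
    exact absurd ((hK i).2 1 1 0 hh.1 hh.2) (by decide)
  have c00 := congrFun (congrFun h1 0) 0
  have c11 := congrFun (congrFun h1 1) 1
  have e00 := congrFun (congrFun h2 0) 0
  have e01 := congrFun (congrFun h2 0) 1
  simp only [Matrix.sum_apply, Matrix.mul_apply, Fin.sum_univ_two, Matrix.conjTranspose_apply,
    Matrix.one_apply_eq] at c00 c11 e00 e01
  have hsq : ∀ z : ℂ, z * star z = ((‖z‖ ^ 2 : ℝ) : ℂ) := fun z => by
    rw [show star z = (starRingEnd ℂ) z from rfl, Complex.mul_conj']; push_cast; rfl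
  have c00' : ∑ i, ‖K i 0 0‖ ^ 2 + ∑ i, ‖K i 1 0‖ ^ 2 = 1 := by
    rw [← Finset.sum_add_distrib]
    have : ((∑ i, (‖K i 0 0‖ ^ 2 + ‖K i 1 0‖ ^ 2) : ℝ) : ℂ) = 1 := by
      rw [← c00, Complex.ofReal_sum]
      refine Finset.sum_congr rfl fun i _ => ?_
      rw [Complex.ofReal_add, ← hsq, ← hsq]; ring
    exact_mod_cast this
  have c11' : ∑ i, ‖K i 0 1‖ ^ 2 + ∑ i, ‖K i 1 1‖ ^ 2 = 1 := by
    rw [← Finset.sum_add_distrib]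
    have : ((∑ i, (‖K i 0 1‖ ^ 2 + ‖K i 1 1‖ ^ 2) : ℝ) : ℂ) = 1 := by
      rw [← c11, Complex.ofReal_sum]
      refine Finset.sum_congr rfl fun i _ => ?_
      rw [Complex.ofReal_add, ← hsq, ← hsq]; ring
    exact_mod_cast this
  have e00' : (∑ i, ‖K i 0 0‖ ^ 2) * ((1 + rz) / 2) + (∑ i, ‖K i 0 1‖ ^ 2) * ((1 - rz) / 2)
      = (1 + sz) / 2 := by
    rw [Finset.sum_mul, Finset.sum_mul, ← Finset.sum_add_distrib]
    have : ((∑ i, (‖K i 0 0‖ ^ 2 * ((1 + rz) / 2) + ‖K i 0 1‖ ^ 2 * ((1 - rz) / 2)) : ℝ) : ℂ)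
        = (((1 + sz) / 2 : ℝ) : ℂ) := by
      have e : (((1 + sz) / 2 : ℝ) : ℂ) = blochState sx sy sz 0 0 := by simp [blochState]
      rw [e, ← e00, Complex.ofReal_sum]
      refine Finset.sum_congr rfl fun i _ => ?_
      rw [Complex.ofReal_add, Complex.ofReal_mul, Complex.ofReal_mul, ← hsq, ← hsq]
      simp only [blochState, Matrix.of_apply, Matrix.cons_val', Matrix.cons_val_zero,
        Matrix.cons_val_one, Matrix.cons_val_fin_one]
      rcases hac i with h | h <;> rw [h] <;> simp <;> ring
    exact_mod_cast this
  have e01' : √(sx ^ 2 + sy ^ 2) / 2 ≤ √(rx ^ 2 + ry ^ 2) / 2 *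
      (∑ i, ‖K i 0 0‖ * ‖K i 1 1‖ + ∑ i, ‖K i 0 1‖ * ‖K i 1 0‖) := by
    rw [← aux_norm sx sy]
    have e : ((sx : ℂ) - sy * Complex.I) / 2 = blochState sx sy sz 0 1 := by simp [blochState]
    rw [e, ← e01, ← Finset.sum_add_distrib, Finset.mul_sum]
    refine (norm_sum_le _ _).trans (Finset.sum_le_sum fun i _ => ?_)
    have e3 : (K i 0 0 * blochState rx ry rz 0 0 + K i 0 1 * blochState rx ry rz 1 0) *
          star (K i 1 0) +
        (K i 0 0 * blochState rx ry rz 0 1 + K i 0 1 * blochState rx ry rz 1 1) * star (K i 1 1)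
        = K i 0 0 * blochState rx ry rz 0 1 * star (K i 1 1) +
          K i 0 1 * blochState rx ry rz 1 0 * star (K i 1 0) := by
      have x1 : K i 0 0 * star (K i 1 0) = 0 := by
        rcases had i with h | h <;> rw [h] <;> simp
      have x2 : K i 0 1 * star (K i 1 1) = 0 := by
        rcases hbc i with h | h <;> rw [h] <;> simp
      linear_combination blochState rx ry rz 0 0 * x1 + blochState rx ry rz 1 1 * x2
    rw [e3]
    refine (norm_add_le _ _).trans ?_
    have n1 : ‖blochState rx ry rz 0 1‖ = √(rx ^ 2 + ry ^ 2) / 2 := by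
      rw [← aux_norm]; simp [blochState]
    have n2 : ‖blochState rx ry rz 1 0‖ = √(rx ^ 2 + ry ^ 2) / 2 := by
      rw [← aux_norm']; simp [blochState]
    rw [norm_mul, norm_mul, norm_mul, norm_mul, norm_star, norm_star, n1, n2]
    apply le_of_eq; ring
  have cs1 := Real.sum_mul_le_sqrt_mul_sqrt Finset.univ (fun i => ‖K i 0 0‖) (fun i => ‖K i 1 1‖)
  have cs2 := Real.sum_mul_le_sqrt_mul_sqrt Finset.univ (fun i => ‖K i 0 1‖) (fun i => ‖K i 1 0‖)
  have pA : 0 ≤ ∑ i, ‖K i 0 0‖ ^ 2 := Finset.sum_nonneg fun i _ => by positivity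
  have pB : 0 ≤ ∑ i, ‖K i 1 1‖ ^ 2 := Finset.sum_nonneg fun i _ => by positivity
  have pC : 0 ≤ ∑ i, ‖K i 0 1‖ ^ 2 := Finset.sum_nonneg fun i _ => by positivity
  have pD : 0 ≤ ∑ i, ‖K i 1 0‖ ^ 2 := Finset.sum_nonneg fun i _ => by positivity
  have hC : ∑ i, ‖K i 0 1‖ ^ 2 = 1 - ∑ i, ‖K i 1 1‖ ^ 2 := by linarith
  have hD : ∑ i, ‖K i 1 0‖ ^ 2 = 1 - ∑ i, ‖K i 0 0‖ ^ 2 := by linarith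
  rw [hC, hD] at cs2
  rw [hC] at e00' pC
  rw [hD] at pD
  have R := aux_real (∑ i, ‖K i 0 0‖ ^ 2) (∑ i, ‖K i 1 1‖ ^ 2) rz √(rx ^ 2 + ry ^ 2)
    √(sx ^ 2 + sy ^ 2) sz pA pB (by linarith) (by linarith)
    (by nlinarith [sq_nonneg rx, sq_nonneg ry])
    (Real.sqrt_nonneg _) (Real.sqrt_nonneg _) (by linarith)
    (by
      have := mul_le_mul_of_nonneg_left (add_le_add cs1 cs2) (Real.sqrt_nonneg (rx ^ 2 + ry ^ 2))
      linarith)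
  rw [Real.sq_sqrt (by positivity), Real.sq_sqrt (by positivity)] at R
  exact R

theorem aux_suf (rx ry rz sx sy sz : ℝ)
    (hs : sx ^ 2 + sy ^ 2 + sz ^ 2 ≤ 1)
    (h1 : (rx ^ 2 + ry ^ 2) * sz ^ 2 + (1 - rz ^ 2) * (sx ^ 2 + sy ^ 2) ≤ rx ^ 2 + ry ^ 2)
    (h2 : Real.sqrt (sx ^ 2 + sy ^ 2) ≤ Real.sqrt (rx ^ 2 + ry ^ 2)) :
    ∃ (N : ℕ) (K : Fin N → Matrix (Fin 2) (Fin 2) ℂ),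
        (∀ i, IsSIKraus (K i)) ∧
        (∑ i, (K i)ᴴ * K i = 1) ∧
        ∑ i, K i * blochState rx ry rz * (K i)ᴴ = blochState sx sy sz := by
  obtain ⟨f, hf0, hf1, hfs, hfz⟩ : ∃ f : ℝ, 0 ≤ f ∧ f ≤ 1 ∧
      √(sx ^ 2 + sy ^ 2) = f * √(rx ^ 2 + ry ^ 2) ∧ sz ^ 2 + (1 - rz ^ 2) * f ^ 2 ≤ 1 := by
    have p1 := Real.sqrt_nonneg (rx ^ 2 + ry ^ 2)
    have p2 := Real.sqrt_nonneg (sx ^ 2 + sy ^ 2)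
    have q1 := Real.sq_sqrt (show 0 ≤ rx ^ 2 + ry ^ 2 by positivity)
    have q2 := Real.sq_sqrt (show 0 ≤ sx ^ 2 + sy ^ 2 by positivity)
    rw [← q1, ← q2] at h1
    set r := √(rx ^ 2 + ry ^ 2)
    set s := √(sx ^ 2 + sy ^ 2)
    by_cases hr0 : r = 0
    · refine ⟨0, le_rfl, zero_le_one, by nlinarith, by nlinarith [sq_nonneg sx, sq_nonneg sy]⟩
    · have hrp : 0 < r := lt_of_le_of_ne p1 (Ne.symm hr0)
      refine ⟨s / r, by positivity, (div_le_one hrp).2 h2, by field_simp, ?_⟩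
      have hsr : s = s / r * r := by field_simp
      set f := s / r
      rw [hsr] at h1
      have : r ^ 2 * (sz ^ 2 + (1 - rz ^ 2) * f ^ 2) ≤ r ^ 2 * 1 := by linarith
      exact le_of_mul_le_mul_left this (by positivity)
  have hcD := Real.cos_arccos (by linarith : -1 ≤ f) hf1
  set D := Real.arccos f
  have hsD := Real.sin_sq_add_cos_sq D
  obtain ⟨S, hS⟩ := aux_unit sz (-Real.sin D) (rz * f) (by rw [hcD] at hsD; nlinarith)
  obtain ⟨u, w, v, t, huw, hvt, hF, hz⟩ : ∃ u w v t : ℝ, u ^ 2 + w ^ 2 = 1 ∧ v ^ 2 + t ^ 2 = 1 ∧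
      u * v + t * w = f ∧ u ^ 2 * (1 + rz) + t ^ 2 * (1 - rz) = 1 + sz := by
    have a1 := Real.cos_sq_add_sin_sq ((S + D) / 2)
    have a2 := Real.cos_sq_add_sin_sq ((S - D) / 2)
    have b1 : S = (S + D) / 2 + (S - D) / 2 := by ring
    have b2 : D = (S + D) / 2 - (S - D) / 2 := by ring
    rw [← hcD] at hS ⊢
    have s1 := Real.sin_add ((S + D) / 2) ((S - D) / 2)
    have s2 := Real.sin_sub ((S + D) / 2) ((S - D) / 2)
    have s3 := Real.cos_add ((S + D) / 2) ((S - D) / 2)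
    have s4 := Real.cos_sub ((S + D) / 2) ((S - D) / 2)
    rw [← b1] at s1 s3
    rw [← b2] at s2 s4
    rw [s1, s2, s3, s4] at hS
    refine ⟨_, _, _, _, a1, a2, by rw [s4]; ring, ?_⟩
    set u := Real.cos ((S + D) / 2)
    set w := Real.sin ((S + D) / 2)
    set v := Real.cos ((S - D) / 2)
    set t := Real.sin ((S - D) / 2)
    have e3 : w ^ 2 = 1 - u ^ 2 := by linarith
    have e4 : t ^ 2 = 1 - v ^ 2 := by linarith
    rw [← hS]
    linear_combination (v ^ 2 + rz * t ^ 2) * e3 + (1 - rz -u ^ 2 + rz * (1 - u ^ 2)) * e4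
  obtain ⟨e, he, hσ⟩ := aux_polar (((sx : ℂ) - sy * Complex.I) / 2)
  obtain ⟨g, hg, hρ⟩ := aux_polar (((rx : ℂ) - ry * Complex.I) / 2)
  rw [aux_norm] at hσ hρ
  have hρ' : ((rx : ℂ) + ry * Complex.I) / 2 = ((√(rx ^ 2 + ry ^ 2) / 2 : ℝ) : ℂ) * star g := by
    have := congrArg star hρ
    rw [star_mul'] at this
    have c1 : star (((√(rx ^ 2 + ry ^ 2) / 2 : ℝ)) : ℂ) = ((√(rx ^ 2 + ry ^ 2) / 2 : ℝ) : ℂ) :=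
      Complex.conj_ofReal _
    rw [c1] at this
    rw [← this]
    simp
  have hσ' : ((sx : ℂ) + sy * Complex.I) / 2 = ((√(sx ^ 2 + sy ^ 2) / 2 : ℝ) : ℂ) * star e := by
    have := congrArg star hσ
    rw [star_mul'] at this
    have c1 : star (((√(sx ^ 2 + sy ^ 2) / 2 : ℝ)) : ℂ) = ((√(sx ^ 2 + sy ^ 2) / 2 : ℝ) : ℂ) :=
      Complex.conj_ofReal _
    rw [c1] at this
    rw [← this]
    simp
  have su : ∀ x : ℝ, star (x : ℂ) = x := fun x => Complex.conj_ofReal x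
  have huw' : (u : ℂ) ^ 2 + w ^ 2 = 1 := by exact_mod_cast huw
  have hvt' : (v : ℂ) ^ 2 + t ^ 2 = 1 := by exact_mod_cast hvt
  have hF' : (u : ℂ) * v + t * w = f := by exact_mod_cast hF
  have hz' : (u : ℂ) ^ 2 * (1 + rz) + t ^ 2 * (1 - rz) = 1 + sz := by exact_mod_cast hz
  rw [hfs] at hσ hσ'
  set q := √(rx ^ 2 + ry ^ 2)
  push_cast at hσ hσ' hρ hρ'
  refine ⟨2, ![!![u * (e * star g), 0; 0, (v : ℂ)], !![0, t * (e * g); (w : ℂ), 0]], ?_, ?_, ?_⟩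
  · intro i
    fin_cases i
    · constructor <;> intro a b c <;> fin_cases a <;> fin_cases b <;> fin_cases c <;> simp
    · constructor <;> intro a b c <;> fin_cases a <;> fin_cases b <;> fin_cases c <;> simp
  · ext i j
    fin_cases i <;> fin_cases j <;>
      simp only [Fin.sum_univ_two, Matrix.add_apply, Matrix.mul_apply, Matrix.conjTranspose_apply,
        Matrix.of_apply, Matrix.cons_val', Matrix.cons_val_zero, Fin.zero_eta, Fin.mk_one,
        Matrix.cons_val_one, Matrix.cons_val_fin_one, star_mul', star_star, su, star_zero,
        Matrix.one_apply_eq]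
    · linear_combination huw' + u ^ 2 * he * (g * star g) + u ^ 2 * hg
    · simp
    · simp
    · linear_combination hvt' + t ^ 2 * he * (g * star g) + t ^ 2 * hg
  · unfold blochState
    rw [hρ, hρ', hσ, hσ']
    ext i j
    fin_cases i <;> fin_cases j <;>
      simp only [Fin.sum_univ_two, Matrix.add_apply, Matrix.mul_apply, Matrix.conjTranspose_apply,
        Matrix.of_apply, Matrix.cons_val', Matrix.cons_val_zero, Fin.zero_eta, Fin.mk_one,
        Matrix.cons_val_one, Matrix.cons_val_fin_one, star_mul', star_star, su, star_zero]
    · linear_combination hz' / 2 + (u ^ 2 * (1 + rz) / 2 + t ^ 2 * (1 - rz) / 2) *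
        (he * (g * star g) + hg)
    · linear_combination (q / 2 * e) * hF' + (q / 2 * e) * (u * v + t * w) * hg
    · linear_combination (q / 2 * star e) * hF' + (q / 2 * star e) * (u * v + t * w) * hg
    · linear_combination (-1 / 2 : ℂ) * hz' + (1 + rz) / 2 * huw' + (1 - rz) / 2 * hvt'

/-- Deterministic conversion of the qubit state `ρ` into `σ` by a strictly incoherent
operation is possible iff `r² sz² + (1-rz²) s² ≤ r²` and `s ≤ r`. -/
theorem deterministic_sio_qubit_conversion_iff
    (rx ry rz sx sy sz : ℝ)
    (hr : rx ^ 2 + ry ^ 2 + rz ^ 2 ≤ 1) (hs : sx ^ 2 + sy ^ 2 + sz ^ 2 ≤ 1) :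
    (∃ (N : ℕ) (K : Fin N → Matrix (Fin 2) (Fin 2) ℂ),
        (∀ i, IsSIKraus (K i)) ∧
        (∑ i, (K i)ᴴ * K i = 1) ∧
        ∑ i, K i * blochState rx ry rz * (K i)ᴴ = blochState sx sy sz) ↔
    ((rx ^ 2 + ry ^ 2) * sz ^ 2 + (1 - rz ^ 2) * (sx ^ 2 + sy ^ 2) ≤ rx ^ 2 + ry ^ 2 ∧
      Real.sqrt (sx ^ 2 + sy ^ 2) ≤ Real.sqrt (rx ^ 2 + ry ^ 2)) := by
  constructor
  · rintro ⟨N, K, hK, h1, h2⟩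
    exact aux_nec rx ry rz sx sy sz hr N K hK h1 h2
  · rintro ⟨h1, h2⟩
    exact aux_suf rx ry rz sx sy sz hs h1 h2
end

section
/- Let 0 ≤ q_w ≤ 1 and let ρ_w = q_w·|φ⁺⟩⟨φ⁺| + ((1−q_w)/4)·I be the two-qubit Werner state, where φ⁺ = (|00⟩+|11⟩)/√2, and let σ be a qubit density matrix with Bloch vector (s_x,s_y,s_z) and s := √(s_x²+s_y²) > 0. Then: (i) if s ≤ q_w·√(1−s_z²), there exist a finite POVM (M_i) on ℂ² (each M_i Hermitian with M_i ⪰ 0 and ∑_i M_i = I) and, for every i with t_i := Tr[(M_i ⊗ I)·ρ_w] > 0, a finite family (K_{i,n}) of incoherent 2×2 Kraus operators with ∑_n K_{i,n}ᴴK_{i,n} = I and ∑_n K_{i,n}·Tr_A[(M_i ⊗ I)·ρ_w]·K_{i,n}ᴴ = t_i·σ (so σ is prepared on Bob's side with unit probability); (ii) if s > q_w·√(1−s_z²), then for every finite POVM (M_i) on ℂ² and every choice of finite families (K_{i,n}) of incoherent 2×2 Kraus operators with ∑_n K_{i,n}ᴴK_{i,n} ⪯ I and ∑_n K_{i,n}·Tr_A[(M_i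 ⊗ I)·ρ_w]·K_{i,n}ᴴ = c_i·σ for some reals c_i ≥ 0, one has ∑_i c_i = 0 (σ cannot be prepared with any nonzero probability). -/
open Matrix BigOperators
open scoped Kronecker Classical ComplexOrder

/-- The maximally entangled two-qubit state `(|00⟩ + |11⟩)/√2`. -/
noncomputable def phiPlus : Fin 2 × Fin 2 → ℂ :=
  fun x => if x.1 = x.2 then ((Real.sqrt 2)⁻¹ : ℝ) else 0

/-- The two-qubit Werner state `q |φ⁺⟩⟨φ⁺| + (1-q)/4 · I`. -/
noncomputable def wernerState (qw : ℝ) : Matrix (Fin 2 × Fin 2) (Fin 2 × Fin 2) ℂ :=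
  (qw : ℂ) • Matrix.vecMulVec phiPlus (star phiPlus) + (((1 - qw) / 4 : ℝ) : ℂ) • 1

lemma ptrace_werner (q : ℝ) (M : Matrix (Fin 2) (Fin 2) ℂ) :
    ptraceA ((M ⊗ₖ (1 : Matrix (Fin 2) (Fin 2) ℂ)) * wernerState q) =
      ((q / 2 : ℝ) : ℂ) • Mᵀ + (((1 - q) / 4 : ℝ) : ℂ) • M.trace • (1 : Matrix (Fin 2) (Fin 2) ℂ) := by
  have h2 : (((Real.sqrt 2)⁻¹ : ℝ) : ℂ) * (((Real.sqrt 2)⁻¹ : ℝ) : ℂ) = 1 / 2 := by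
    rw [← Complex.ofReal_mul, ← mul_inv, Real.mul_self_sqrt (by norm_num)]; norm_num
  simp only [Complex.ofReal_inv] at h2
  ext i j
  fin_cases i <;> fin_cases j <;>
    simp [ptraceA, wernerState, phiPlus, Matrix.mul_apply, Fintype.sum_prod_type, Fin.sum_univ_two,
      Matrix.vecMulVec_apply, Matrix.trace, Matrix.one_apply, h2] <;> ring

lemma trace_werner (q : ℝ) (M : Matrix (Fin 2) (Fin 2) ℂ) :
    ((M ⊗ₖ (1 : Matrix (Fin 2) (Fin 2) ℂ)) * wernerState q).trace = M.trace / 2 := by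
  have h : ((M ⊗ₖ (1 : Matrix (Fin 2) (Fin 2) ℂ)) * wernerState q).trace =
      (ptraceA ((M ⊗ₖ (1 : Matrix (Fin 2) (Fin 2) ℂ)) * wernerState q)).trace := by
    simp only [Matrix.trace, ptraceA, Matrix.diag, Fintype.sum_prod_type]
    exact Finset.sum_comm
  rw [h, ptrace_werner]
  simp [Matrix.trace, Fin.sum_univ_two]
  ring

lemma kraus_exists (q sx sy sz wx wy v a b e : ℝ) (he : e ^ 2 = 1)
    (ha : a ^ 2 = (1 + sz) / 2) (hb : b ^ 2 = (1 - sz) / 2) (hw : wx ^ 2 + wy ^ 2 + v ^ 2 = 1)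
    (hx : 2 * a * b * q * wx = sx) (hy : 2 * a * b * q * wy = sy) :
    ∃ (N : ℕ) (K : Fin N → Matrix (Fin 2) (Fin 2) ℂ),
      (∀ n, IsIncoherentKraus (K n)) ∧ (∑ n, (K n)ᴴ * K n = 1) ∧
      ∑ n, K n * !![(1 / 4 : ℂ), (e * q / 4 : ℝ); (e * q / 4 : ℝ), 1 / 4] * (K n)ᴴ =
        ((1 / 2 : ℝ) : ℂ) • blochState sx sy sz := by
  refine ⟨4, ![!![(a : ℂ), 0; 0, (⟨b * e * wx, b * e * wy⟩ : ℂ)],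
    !![0, (a : ℂ); (⟨b * e * wx, b * e * wy⟩ : ℂ), 0],
    !![0, 0; 0, ((b * v : ℝ) : ℂ)], !![0, 0; ((b * v : ℝ) : ℂ), 0]], ?_, ?_, ?_⟩
  · intro n j i i'
    fin_cases n <;> fin_cases j <;> fin_cases i <;> fin_cases i' <;> simp
  · have e1 : a * a + b * e * wx * (b * e * wx) + b * e * wy * (b * e * wy) + b * v * (b * v) = 1 := by
      linear_combination ha + hb + b ^ 2 * hw + b ^ 2 * (wx ^ 2 + wy ^ 2) * he
    ext i j
    fin_cases i <;> fin_cases j <;> apply Complex.ext <;>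
      simp [Fin.sum_univ_four, Matrix.mul_apply, Fin.sum_univ_two] <;> 
      first | linear_combination e1 | ring1
  · ext i j
    fin_cases i <;> fin_cases j <;> apply Complex.ext <;>
      simp [Fin.sum_univ_four, Matrix.vecMul, dotProduct, Fin.sum_univ_two, blochState] <;>
      first
      | ring1
      | linear_combination (1 / 2) * ha
      | linear_combination (1 / 2) * hb + (1 / 2) * b ^ 2 * hw + (1 / 2) * b ^ 2 * (wx ^ 2 + wy ^ 2) * he
      | linear_combination (1 / 4) * hx + (1 / 2) * a * b * q * wx * he
      | linear_combination (1 / 4) * hy + (1 / 2) * a * b * q * wy * he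
      | linear_combination -(1 / 4) * hy - (1 / 2) * a * b * q * wy * he

/-- Cone of matrices with bounded coherence ratio. -/
def CohCone (q : ℝ) (Y : Matrix (Fin 2) (Fin 2) ℂ) : Prop :=
  0 ≤ (Y 0 0).re ∧ 0 ≤ (Y 1 1).re ∧ ‖Y 0 1‖ ≤ q * Real.sqrt ((Y 0 0).re * (Y 1 1).re)

lemma CohCone.add {q : ℝ} (hq : 0 ≤ q) {Y Z : Matrix (Fin 2) (Fin 2) ℂ}
    (hY : CohCone q Y) (hZ : CohCone q Z) : CohCone q (Y + Z) := by
  obtain ⟨y0, y1, y⟩ := hY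
  obtain ⟨z0, z1, z⟩ := hZ
  refine ⟨by simpa using add_nonneg y0 z0, by simpa using add_nonneg y1 z1, ?_⟩
  simp only [Matrix.add_apply, Complex.add_re]
  generalize (Y 0 0).re = A at *
  generalize (Y 1 1).re = B at *
  generalize (Z 0 0).re = C at *
  generalize (Z 1 1).re = D at *
  have key : Real.sqrt (A * B) + Real.sqrt (C * D) ≤ Real.sqrt ((A + C) * (B + D)) := by
    apply Real.le_sqrt_of_sq_le
    rw [Real.sqrt_mul y0, Real.sqrt_mul z0]
    have h1 := Real.sq_sqrt y0
    have h2 := Real.sq_sqrt y1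
    have h3 := Real.sq_sqrt z0
    have h4 := Real.sq_sqrt z1
    generalize Real.sqrt A = a at *
    generalize Real.sqrt B = b at *
    generalize Real.sqrt C = c at *
    generalize Real.sqrt D = d at *
    subst h1 h2 h3 h4
    nlinarith [sq_nonneg (a * d - b * c)]
  calc ‖Y 0 1 + Z 0 1‖ ≤ ‖Y 0 1‖ + ‖Z 0 1‖ := norm_add_le _ _
    _ ≤ q * (Real.sqrt (A * B) + Real.sqrt (C * D)) := by rw [mul_add]; exact add_le_add y z
    _ ≤ _ := mul_le_mul_of_nonneg_left key hq

lemma CohCone.sum {q : ℝ} (hq : 0 ≤ q) {N : ℕ} {Y : Fin N → Matrix (Fin 2) (Fin 2) ℂ}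
    (h : ∀ n, CohCone q (Y n)) : CohCone q (∑ n, Y n) := by
  apply Finset.sum_induction Y (CohCone q) (fun _ _ ha hb => ha.add hq hb)
  · simp [CohCone]
  · exact fun n _ => h n

lemma CohCone.conj {q : ℝ} (hq : 0 ≤ q) {X K : Matrix (Fin 2) (Fin 2) ℂ} (hX : X.PosSemidef)
    (h : CohCone q X) (hK : IsIncoherentKraus K) : CohCone q (K * X * Kᴴ) := by
  have hp := hX.mul_mul_conjTranspose_same K
  have p0 := (Complex.le_def.1 (hp.diag_nonneg (i := 0))).1
  have p1 := (Complex.le_def.1 (hp.diag_nonneg (i := 1))).1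
  refine ⟨p0, p1, ?_⟩
  obtain ⟨x0, x1, x⟩ := h
  have h10 : X 1 0 = star (X 0 1) := (hX.1.apply 1 0).symm
  have c0 : K 0 0 = 0 ∨ K 1 0 = 0 := by
    by_contra! hc; exact absurd (hK 0 0 1 hc.1 hc.2) (by decide)
  have c1 : K 0 1 = 0 ∨ K 1 1 = 0 := by
    by_contra! hc; exact absurd (hK 1 0 1 hc.1 hc.2) (by decide)
  have hns : ∀ z u : ℂ, (z * u * star z).re = ‖z‖ ^ 2 * u.re := by
    intro z u
    rw [← Complex.normSq_eq_norm_sq, Complex.normSq_apply]; simp; ring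
  have hsq : ∀ a b A B : ℝ, 0 ≤ a → 0 ≤ b → 
      Real.sqrt (a ^ 2 * A * (b ^ 2 * B)) = a * b * Real.sqrt (A * B) := by
    intro a b A B ha hb
    rw [show a ^ 2 * A * (b ^ 2 * B) = (a * b) ^ 2 * (A * B) by ring,
      Real.sqrt_mul (by positivity), Real.sqrt_sq (by positivity)]
  have hz : 0 ≤ q * Real.sqrt (((K * X * Kᴴ) 0 0).re * ((K * X * Kᴴ) 1 1).re) := by positivity
  rcases c0 with h0 | h0 <;> rcases c1 with h1 | h1
  · refine le_trans (le_of_eq ?_) hz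
    simp [Matrix.mul_apply, Fin.sum_univ_two, h0, h1]
  · have e0 : (K * X * Kᴴ) 0 0 = K 0 1 * X 1 1 * star (K 0 1) := by
      simp [Matrix.mul_apply, Fin.sum_univ_two, h0]
    have e1 : (K * X * Kᴴ) 1 1 = K 1 0 * X 0 0 * star (K 1 0) := by
      simp [Matrix.mul_apply, Fin.sum_univ_two, h1]
    have e2 : (K * X * Kᴴ) 0 1 = K 0 1 * star (X 0 1) * star (K 1 0) := by
      simp [Matrix.mul_apply, Fin.sum_univ_two, h0, h1, h10]
    rw [e0, e1, e2, hns, hns, hsq _ _ _ _ (norm_nonneg _) (norm_nonneg _), norm_mul, norm_mul,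
      norm_star, norm_star, mul_comm (X 1 1).re]
    calc _ = ‖K 0 1‖ * ‖K 1 0‖ * ‖X 0 1‖ := by ring
      _ ≤ ‖K 0 1‖ * ‖K 1 0‖ * (q * Real.sqrt ((X 0 0).re * (X 1 1).re)) := by gcongr
      _ = _ := by ring
  · have e0 : (K * X * Kᴴ) 0 0 = K 0 0 * X 0 0 * star (K 0 0) := by
      simp [Matrix.mul_apply, Fin.sum_univ_two, h1]
    have e1 : (K * X * Kᴴ) 1 1 = K 1 1 * X 1 1 * star (K 1 1) := by
      simp [Matrix.mul_apply, Fin.sum_univ_two, h0]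
    have e2 : (K * X * Kᴴ) 0 1 = K 0 0 * X 0 1 * star (K 1 1) := by
      simp [Matrix.mul_apply, Fin.sum_univ_two, h0, h1]
    rw [e0, e1, e2, hns, hns, hsq _ _ _ _ (norm_nonneg _) (norm_nonneg _), norm_mul, norm_mul,
      norm_star]
    calc _ = ‖K 0 0‖ * ‖K 1 1‖ * ‖X 0 1‖ := by ring
      _ ≤ ‖K 0 0‖ * ‖K 1 1‖ * (q * Real.sqrt ((X 0 0).re * (X 1 1).re)) := by gcongr
      _ = _ := by ring
  · refine le_trans (le_of_eq ?_) hz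
    simp [Matrix.mul_apply, Fin.sum_univ_two, h0, h1]

lemma werner_psd {q : ℝ} (h0 : 0 ≤ q) (h1 : q ≤ 1) {M : Matrix (Fin 2) (Fin 2) ℂ}
    (hM : M.PosSemidef) :
    (((q / 2 : ℝ) : ℂ) • Mᵀ + (((1 - q) / 4 : ℝ) : ℂ) • M.trace •
      (1 : Matrix (Fin 2) (Fin 2) ℂ)).PosSemidef := by
  have a1 : (0 : ℂ) ≤ ((q / 2 : ℝ) : ℂ) := by exact_mod_cast (by linarith : 0 ≤ q / 2)
  have a2 : (0 : ℂ) ≤ (((1 - q) / 4 : ℝ) : ℂ) := by exact_mod_cast (by linarith : 0 ≤ (1 - q) / 4)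
  exact (hM.transpose.smul a1).add ((Matrix.PosSemidef.one.smul hM.trace_nonneg).smul a2)

lemma werner_cone {q : ℝ} (h0 : 0 ≤ q) (h1 : q ≤ 1) {M : Matrix (Fin 2) (Fin 2) ℂ}
    (hM : M.PosSemidef) :
    CohCone q (((q / 2 : ℝ) : ℂ) • Mᵀ + (((1 - q) / 4 : ℝ) : ℂ) • M.trace •
      (1 : Matrix (Fin 2) (Fin 2) ℂ)) := by
  have hp := werner_psd h0 h1 hM
  refine ⟨(Complex.le_def.1 (hp.diag_nonneg (i := 0))).1,
    (Complex.le_def.1 (hp.diag_nonneg (i := 1))).1, ?_⟩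
  obtain ⟨m0, i0⟩ := Complex.le_def.1 (hM.diag_nonneg (i := 0))
  obtain ⟨m1, i1⟩ := Complex.le_def.1 (hM.diag_nonneg (i := 1))
  simp only [Complex.zero_re, Complex.zero_im] at m0 m1 i0 i1
  have hd := (Complex.le_def.1 hM.det_nonneg).1
  have h01 : M 0 1 = star (M 1 0) := (hM.1.apply 0 1).symm
  have hn : ‖M 1 0‖ ^ 2 ≤ (M 0 0).re * (M 1 1).re := by
    rw [← Complex.normSq_eq_norm_sq, Complex.normSq_apply]
    rw [Matrix.det_fin_two, h01] at hd
    simp [← i0, ← i1] at hd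
    linarith
  simp [Matrix.trace, Fin.sum_univ_two, ← i0, ← i1]
  generalize (M 0 0).re = m at *
  generalize (M 1 1).re = n at *
  rw [abs_of_nonneg h0]
  have : ‖M 1 0‖ / 2 ≤ Real.sqrt ((q / 2 * m + (1 - q) / 4 * (m + n)) *
      (q / 2 * n + (1 - q) / 4 * (m + n))) := by
    apply Real.le_sqrt_of_sq_le
    nlinarith [mul_nonneg (mul_nonneg h0 (sub_nonneg.2 h1)) (sq_nonneg (m - n)),
      mul_nonneg (mul_nonneg (sub_nonneg.2 h1) (sub_nonneg.2 h1)) (sq_nonneg (m - n))]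
  calc q / 2 * ‖M 1 0‖ = q * (‖M 1 0‖ / 2) := by ring
    _ ≤ _ := mul_le_mul_of_nonneg_left this h0

/-- Assisted incoherent conversion of the Werner state into a coherent qubit target `σ`:
possible with unit probability iff `s ≤ q_w √(1 - sz²)`, impossible otherwise. -/
theorem werner_assisted_conversion
    (qw : ℝ) (hqw0 : 0 ≤ qw) (hqw1 : qw ≤ 1)
    (sx sy sz : ℝ) (hs : sx ^ 2 + sy ^ 2 + sz ^ 2 ≤ 1) (hsc : 0 < sx ^ 2 + sy ^ 2) :
    (Real.sqrt (sx ^ 2 + sy ^ 2) ≤ qw * Real.sqrt (1 - sz ^ 2) →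
      ∃ (m : ℕ) (M : Fin m → Matrix (Fin 2) (Fin 2) ℂ),
        (∀ i, (M i).IsHermitian) ∧ (∀ i, (M i).PosSemidef) ∧ (∑ i, M i = 1) ∧
        ∀ i, ∀ t : ℝ, 0 < t →
          ((M i ⊗ₖ (1 : Matrix (Fin 2) (Fin 2) ℂ)) * wernerState qw).trace = (t : ℂ) →
          ∃ (N : ℕ) (K : Fin N → Matrix (Fin 2) (Fin 2) ℂ),
            (∀ n, IsIncoherentKraus (K n)) ∧ (∑ n, (K n)ᴴ * K n = 1) ∧
            ∑ n, K n * ptraceA ((M i ⊗ₖ (1 : Matrix (Fin 2) (Fin 2) ℂ)) *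
                wernerState qw) * (K n)ᴴ = (t : ℂ) • blochState sx sy sz) ∧
    (qw * Real.sqrt (1 - sz ^ 2) < Real.sqrt (sx ^ 2 + sy ^ 2) →
      ∀ (m : ℕ) (M : Fin m → Matrix (Fin 2) (Fin 2) ℂ),
        (∀ i, (M i).IsHermitian) → (∀ i, (M i).PosSemidef) → (∑ i, M i = 1) →
        ∀ c : Fin m → ℝ, (∀ i, 0 ≤ c i) →
        (∀ i, ∃ (N : ℕ) (K : Fin N → Matrix (Fin 2) (Fin 2) ℂ),
          (∀ n, IsIncoherentKraus (K n)) ∧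
          ((1 : Matrix (Fin 2) (Fin 2) ℂ) - ∑ n, (K n)ᴴ * K n).PosSemidef ∧
          ∑ n, K n * ptraceA ((M i ⊗ₖ (1 : Matrix (Fin 2) (Fin 2) ℂ)) *
              wernerState qw) * (K n)ᴴ = (c i : ℂ) • blochState sx sy sz) →
        ∑ i, c i = 0) := by
  have hz : 0 < 1 - sz ^ 2 := by linarith
  constructor
  · intro h
    have hs0 : 0 < Real.sqrt (sx ^ 2 + sy ^ 2) := Real.sqrt_pos.2 hsc
    have hD : 0 < Real.sqrt (1 - sz ^ 2) := Real.sqrt_pos.2 hz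
    have hq : 0 < qw := by
      by_contra hq
      have : qw = 0 := le_antisymm (not_lt.1 hq) hqw0
      rw [this, zero_mul] at h
      linarith
    have hle : sx ^ 2 + sy ^ 2 ≤ qw ^ 2 * (1 - sz ^ 2) := by
      have := mul_self_le_mul_self hs0.le h
      rw [Real.mul_self_sqrt hsc.le] at this
      calc _ ≤ _ := this
        _ = qw ^ 2 * (Real.sqrt (1 - sz ^ 2)) ^ 2 := by ring
        _ = _ := by rw [Real.sq_sqrt hz.le]
    set a := Real.sqrt ((1 + sz) / 2) with ha
    set b := Real.sqrt ((1 - sz) / 2) with hb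
    have hz1 : 0 < 1 + sz := by nlinarith
    have hz2 : 0 < 1 - sz := by nlinarith
    have ha2 : a ^ 2 = (1 + sz) / 2 := Real.sq_sqrt (by linarith)
    have hb2 : b ^ 2 = (1 - sz) / 2 := Real.sq_sqrt (by linarith)
    have ha0 : 0 < a := Real.sqrt_pos.2 (by linarith)
    have hb0 : 0 < b := Real.sqrt_pos.2 (by linarith)
    have hg : 0 < 2 * a * b * qw := by positivity
    have hg2 : (2 * a * b * qw) ^ 2 = qw ^ 2 * (1 - sz ^ 2) := by
      rw [show (2 * a * b * qw) ^ 2 = 4 * a ^ 2 * b ^ 2 * qw ^ 2 by ring, ha2, hb2]; ring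
    set g := 2 * a * b * qw with hgd
    have hw1 : (sx / g) ^ 2 + (sy / g) ^ 2 ≤ 1 := by
      rw [div_pow, div_pow, ← add_div, div_le_one (by positivity), hg2]; exact hle
    let e : Fin 2 → ℝ := ![1, -1]
    have he : ∀ i, e i ^ 2 = 1 := by intro i; fin_cases i <;> simp [e]
    let M : Fin 2 → Matrix (Fin 2) (Fin 2) ℂ := fun i =>
      !![1 / 2, ((e i / 2 : ℝ) : ℂ); ((e i / 2 : ℝ) : ℂ), 1 / 2]
    have hsd : ∀ i, (M i).PosSemidef := by
      intro i
      have : M i = (M i)ᴴ * M i := by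
        have h2 : (e i : ℂ) ^ 2 = 1 := by exact_mod_cast he i
        have h3 : (starRingEnd ℂ) 2 = 2 := map_ofNat _ 2
        ext k l
        fin_cases k <;> fin_cases l <;> simp [M, Matrix.mul_apply, Fin.sum_univ_two, h3]
        · linear_combination (-1 / 4) * h2
        · ring
        · ring
        · linear_combination (-1 / 4) * h2
      rw [this]
      exact Matrix.posSemidef_conjTranspose_mul_self _
    refine ⟨2, M, fun i => (hsd i).1, hsd, ?_, ?_⟩
    · ext k l
      fin_cases k <;> fin_cases l <;> simp [M, e, Fin.sum_univ_two] <;> norm_num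
    · intro i t _ ht
      rw [trace_werner] at ht
      have ht2 : t = 1 / 2 := by
        have : ((1 / 2 : ℝ) : ℂ) = (t : ℂ) := by
          rw [← ht]; simp [M, Matrix.trace, Fin.sum_univ_two]
        exact_mod_cast this.symm
      rw [ptrace_werner, ht2]
      have hX : ((qw / 2 : ℝ) : ℂ) • (M i)ᵀ + (((1 - qw) / 4 : ℝ) : ℂ) • (M i).trace •
          (1 : Matrix (Fin 2) (Fin 2) ℂ) =
          !![(1 / 4 : ℂ), (e i * qw / 4 : ℝ); (e i * qw / 4 : ℝ), 1 / 4] := by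
        ext k l
        fin_cases k <;> fin_cases l <;> simp [M, Matrix.trace, Fin.sum_univ_two] <;> ring
      rw [hX]
      refine kraus_exists qw sx sy sz (sx / g) (sy / g)
        (Real.sqrt (1 - ((sx / g) ^ 2 + (sy / g) ^ 2))) a b (e i) (he i) ha2 hb2 ?_ ?_ ?_
      · rw [Real.sq_sqrt (by linarith)]; ring
      · rw [← hgd]; field_simp
      · rw [← hgd]; field_simp
  · intro h m M _ hM _ c hc hK
    apply Finset.sum_eq_zero
    intro i _
    obtain ⟨N, K, hinc, _, hsum⟩ := hK i
    rw [ptrace_werner] at hsum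
    have hcone := CohCone.sum hqw0 (fun n =>
      (werner_cone hqw0 hqw1 (hM i)).conj hqw0 (werner_psd hqw0 hqw1 (hM i)) (hinc n))
    rw [hsum] at hcone
    obtain ⟨_, _, h3⟩ := hcone
    by_contra hne
    have hcp : 0 < c i := lt_of_le_of_ne (hc i) (Ne.symm hne)
    have e0 : (((c i : ℂ) • blochState sx sy sz) 0 0).re = c i * ((1 + sz) / 2) := by
      simp [blochState]
    have e1 : (((c i : ℂ) • blochState sx sy sz) 1 1).re = c i * ((1 - sz) / 2) := by
      simp [blochState]
    have e2 : ‖((c i : ℂ) • blochState sx sy sz) 0 1‖ =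
        c i / 2 * Real.sqrt (sx ^ 2 + sy ^ 2) := by
      have : ‖(sx : ℂ) - sy * Complex.I‖ = Real.sqrt (sx ^ 2 + sy ^ 2) := by
        rw [Complex.norm_def, Complex.normSq_apply]; simp; ring_nf
      simp [blochState, this, abs_of_pos hcp]; ring
    rw [e0, e1, e2, show c i * ((1 + sz) / 2) * (c i * ((1 - sz) / 2)) =
      (c i / 2) ^ 2 * (1 - sz ^ 2) by ring, Real.sqrt_mul (by positivity),
      Real.sqrt_sq (by positivity)] at h3
    have := mul_lt_mul_of_pos_left h (by positivity : 0 < c i / 2)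
    linarith
end

section
/- Let ψ ∈ ℂ² ⊗ ℂ² be a unit vector (a pure two-qubit state shared by Alice and Bob), let ρ^B = Tr_A(ψψᴴ) have Bloch vector (r_x,r_y,r_z), and let σ be a qubit density matrix with Bloch vector (s_x,s_y,s_z), s := √(s_x²+s_y²) > 0. Consider all assisted conversion protocols consisting of a finite POVM (M_i) on Alice's qubit (each M_i Hermitian with M_i ⪰ 0 and ∑_i M_i = I) together with, for each outcome i, a finite family (K_{i,n}) of incoherent 2×2 Kraus operators with ∑_n K_{i,n}ᴴK_{i,n} ⪯ I such that ∑_n K_{i,n}·Tr_A[(M_i ⊗ I)·ψψᴴ]·K_{i,n}ᴴ = c_i·σ for some reals c_i ≥ 0; the success probability of the protocol is ∑_i c_i. The supremum of the success probability over all such protocols equals min{ 1, (1 − |r_z|)·(1 + √(1−s²))/s² }. -/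
open Matrix BigOperators
open scoped Kronecker Classical ComplexOrder

lemma aux_pair (W K : Matrix (Fin 2) (Fin 2) ℂ) (hW : W.PosSemidef) (hK : IsIncoherentKraus K) :
    ∃ x y : ℝ, 0 ≤ x ∧ 0 ≤ y ∧ x + y ≤ (trace (K * W * Kᴴ)).re ∧
      x ≤ ((Kᴴ * K) 0 0).re * (W 0 0).re ∧ y ≤ ((Kᴴ * K) 1 1).re * (W 1 1).re ∧
      ‖(K * W * Kᴴ) 0 1‖ ≤ √(x * y) := by
  have h0 : 0 ≤ (W 0 0).re := (Complex.nonneg_iff.1 (hW.diag_nonneg (i := 0))).1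
  have h1 : 0 ≤ (W 1 1).re := (Complex.nonneg_iff.1 (hW.diag_nonneg (i := 1))).1
  have i0 : (W 0 0).im = 0 := (Complex.nonneg_iff.1 (hW.diag_nonneg (i := 0))).2.symm
  have i1 : (W 1 1).im = 0 := (Complex.nonneg_iff.1 (hW.diag_nonneg (i := 1))).2.symm
  have h10 : W 1 0 = star (W 0 1) := (hW.isHermitian.apply 1 0).symm
  have hdet : Complex.normSq (W 0 1) ≤ (W 0 0).re * (W 1 1).re := by
    have := (Complex.nonneg_iff.1 hW.det_nonneg).1
    rw [det_fin_two, h10] at this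
    simp [Complex.normSq_apply, i0, i1] at this ⊢
    linarith
  have htr : 0 ≤ (trace (K * W * Kᴴ)).re :=
    (Complex.nonneg_iff.1 (hW.mul_mul_conjTranspose_same K).trace_nonneg).1
  have c0 : K 0 0 = 0 ∨ K 1 0 = 0 := by
    by_contra! h
    exact absurd (hK 0 0 1 h.1 h.2) (by decide)
  have c1 : K 0 1 = 0 ∨ K 1 1 = 0 := by
    by_contra! h
    exact absurd (hK 1 0 1 h.1 h.2) (by decide)
  have n0 : 0 ≤ ((Kᴴ * K) 0 0).re * (W 0 0).re :=
    mul_nonneg (Complex.nonneg_iff.1 ((posSemidef_conjTranspose_mul_self K).diag_nonneg (i := 0))).1 h0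
  have n1 : 0 ≤ ((Kᴴ * K) 1 1).re * (W 1 1).re :=
    mul_nonneg (Complex.nonneg_iff.1 ((posSemidef_conjTranspose_mul_self K).diag_nonneg (i := 1))).1 h1
  rcases c0 with c0 | c0 <;> rcases c1 with c1 | c1
  · refine ⟨0, 0, le_rfl, le_rfl, by simpa using htr, n0, n1, ?_⟩
    simp [mul_apply, Fin.sum_univ_two, c0, c1]
  · refine ⟨_, _, n0, n1, ?_, le_rfl, le_rfl, ?_⟩
    · simp [mul_apply, trace, Fin.sum_univ_two, c0, c1, i0, i1]
      apply le_of_eq; ring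
    · apply Real.le_sqrt_of_sq_le
      rw [← Complex.normSq_eq_norm_sq]
      simp [mul_apply, Fin.sum_univ_two, c0, c1, h10]
      have := mul_le_mul_of_nonneg_left hdet (mul_nonneg (Complex.normSq_nonneg (K 0 1)) (Complex.normSq_nonneg (K 1 0)))
      simp only [Complex.normSq_apply] at this ⊢
      linarith
  · refine ⟨_, _, n0, n1, ?_, le_rfl, le_rfl, ?_⟩
    · simp [mul_apply, trace, Fin.sum_univ_two, c0, c1, i0, i1]
      apply le_of_eq; ring
    · apply Real.le_sqrt_of_sq_le
      rw [← Complex.normSq_eq_norm_sq]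
      simp [mul_apply, Fin.sum_univ_two, c0, c1, h10]
      have := mul_le_mul_of_nonneg_left hdet (mul_nonneg (Complex.normSq_nonneg (K 0 0)) (Complex.normSq_nonneg (K 1 1)))
      simp only [Complex.normSq_apply] at this ⊢
      linarith
  · refine ⟨0, 0, le_rfl, le_rfl, by simpa using htr, n0, n1, ?_⟩
    simp [mul_apply, Fin.sum_univ_two, c0, c1]

open scoped MatrixOrder in
lemma aux_trace (A B : Matrix (Fin 2) (Fin 2) ℂ) (hA : A.PosSemidef) (hB : B.PosSemidef) :
    0 ≤ (trace (A * B)).re := by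
  obtain ⟨C, rfl⟩ := CStarAlgebra.nonneg_iff_eq_star_mul_self.mp hB.nonneg
  have := (hA.mul_mul_conjTranspose_same C).trace_nonneg
  rw [trace_mul_cycle, trace_mul_comm] at this
  exact (Complex.nonneg_iff.1 this).1

lemma aux_upper_s19 (W : Matrix (Fin 2) (Fin 2) ℂ) (hW : W.PosSemidef) (N : ℕ)
    (K : Fin N → Matrix (Fin 2) (Fin 2) ℂ) (hK : ∀ n, IsIncoherentKraus (K n))
    (hS : ((1 : Matrix (Fin 2) (Fin 2) ℂ) - ∑ n, (K n)ᴴ * K n).PosSemidef)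
    (c sx sy sz : ℝ) (hc : 0 ≤ c) 
    (hX : ∑ n, K n * W * (K n)ᴴ = (c : ℂ) • blochState sx sy sz) :
    c ≤ (W 0 0).re + (W 1 1).re ∧
    c * (1 - √(1 - (sx ^ 2 + sy ^ 2))) ≤ 2 * (W 0 0).re ∧
    c * (1 - √(1 - (sx ^ 2 + sy ^ 2))) ≤ 2 * (W 1 1).re := by
  have h0 : 0 ≤ (W 0 0).re := (Complex.nonneg_iff.1 (hW.diag_nonneg (i := 0))).1
  have h1 : 0 ≤ (W 1 1).re := (Complex.nonneg_iff.1 (hW.diag_nonneg (i := 1))).1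
  have htr : ∑ n, (trace (K n * W * (K n)ᴴ)).re = c := by
    have := congrArg (fun X => (trace X).re) hX
    simp only [trace_sum, Complex.re_sum] at this
    rw [this]
    simp [trace, blochState, Fin.sum_univ_two]
    ring
  have hoff : c * √(sx ^ 2 + sy ^ 2) / 2 ≤ ∑ n, ‖(K n * W * (K n)ᴴ) 0 1‖ := by
    have := congrArg (fun X => ‖X 0 1‖) hX
    simp only [Matrix.sum_apply] at this
    refine le_trans (le_of_eq ?_) (norm_sum_le _ _)
    rw [this]
    have e : ‖(sx : ℂ) - sy * Complex.I‖ = √(sx ^ 2 + sy ^ 2) := by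
      rw [Complex.norm_def]; simp [Complex.normSq_apply]; ring_nf
    simp [blochState, e, abs_of_nonneg hc]
    ring
  have hd : ∀ j, ∑ n, (((K n)ᴴ * K n) j j).re ≤ 1 := by
    intro j
    have := (Complex.nonneg_iff.1 (hS.diag_nonneg (i := j))).1
    simp only [Matrix.sub_apply, Matrix.sum_apply, Complex.sub_re, Complex.re_sum, one_apply_eq, Complex.one_re] at this
    linarith
  choose x y hx hy hxy hx0 hy1 hn using fun n => aux_pair W (K n) hW (hK n)
  have hA : ∑ n, x n ≤ (W 0 0).re := by
    calc _ ≤ ∑ n, (((K n)ᴴ * K n) 0 0).re * (W 0 0).re := Finset.sum_le_sum fun n _ => hx0 n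
      _ ≤ _ := by rw [← Finset.sum_mul]; nlinarith [hd 0]
  have hB : ∑ n, y n ≤ (W 1 1).re := by
    calc _ ≤ ∑ n, (((K n)ᴴ * K n) 1 1).re * (W 1 1).re := Finset.sum_le_sum fun n _ => hy1 n
      _ ≤ _ := by rw [← Finset.sum_mul]; nlinarith [hd 1]
  have hAB : ∑ n, x n + ∑ n, y n ≤ c := by
    rw [← htr, ← Finset.sum_add_distrib]; exact Finset.sum_le_sum fun n _ => hxy n
  have hCS : (∑ n, √(x n * y n)) ^ 2 ≤ (∑ n, x n) * ∑ n, y n :=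
    Finset.sum_sq_le_sum_mul_sum_of_sq_le_mul _ (fun n _ => hx n) (fun n _ => hy n)
      (fun n _ => (Real.sq_sqrt (mul_nonneg (hx n) (hy n))).le)
  have hle : c * √(sx ^ 2 + sy ^ 2) / 2 ≤ ∑ n, √(x n * y n) :=
    hoff.trans (Finset.sum_le_sum fun n _ => hn n)
  have hsq : (c * √(sx ^ 2 + sy ^ 2) / 2) ^ 2 ≤ (∑ n, x n) * ∑ n, y n :=
    le_trans (pow_le_pow_left₀ (by positivity) hle 2) hCS
  have hA0 : 0 ≤ ∑ n, x n := Finset.sum_nonneg fun n _ => hx n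
  have hB0 : 0 ≤ ∑ n, y n := Finset.sum_nonneg fun n _ => hy n
  generalize (∑ n, x n) = A at *
  generalize (∑ n, y n) = B at *
  have hss := Real.sq_sqrt (show 0 ≤ sx ^ 2 + sy ^ 2 by positivity)
  have key : ∀ A B : ℝ, 0 ≤ A → 0 ≤ B → A + B ≤ c → (c * √(sx ^ 2 + sy ^ 2) / 2) ^ 2 ≤ A * B →
      c * (1 - √(1 - (sx ^ 2 + sy ^ 2))) ≤ 2 * A := by
    intro A B hA hB h h2
    have : (c - 2 * A) ^ 2 ≤ c ^ 2 * (1 - (sx ^ 2 + sy ^ 2)) := by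
      rw [div_pow, mul_pow, hss] at h2
      nlinarith
    have := Real.le_sqrt_of_sq_le this
    rw [Real.sqrt_mul (by positivity), Real.sqrt_sq hc] at this
    linarith
  refine ⟨?_, ?_, ?_⟩
  · have := aux_trace _ _ hS hW
    rw [sub_mul, one_mul, trace_sub, Finset.sum_mul, trace_sum] at this
    have e : ∀ n, trace ((K n)ᴴ * K n * W) = trace (K n * W * (K n)ᴴ) := fun n =>
      (trace_mul_cycle _ _ _).symm
    simp only [e, Complex.sub_re, Complex.re_sum, htr] at this
    simp [trace, Fin.sum_univ_two] at this
    linarith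
  · have := key A B hA0 hB0 hAB hsq; linarith
  · have := key B A hB0 hA0 (by linarith) (by linarith); linarith

noncomputable def kD (a b : ℝ) (v : ℂ) : Matrix (Fin 2) (Fin 2) ℂ := !![a * v, 0; 0, b]
noncomputable def kA (a b : ℝ) (v : ℂ) : Matrix (Fin 2) (Fin 2) ℂ := !![0, b * v; a, 0]

lemma kD_inc (a b : ℝ) (v : ℂ) : IsIncoherentKraus (kD a b v) := by
  intro j i i'
  fin_cases j <;> fin_cases i <;> fin_cases i' <;> simp [kD]

lemma kA_inc (a b : ℝ) (v : ℂ) : IsIncoherentKraus (kA a b v) := by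
  intro j i i'
  fin_cases j <;> fin_cases i <;> fin_cases i' <;> simp [kA]

lemma kD_sq (a b : ℝ) (v : ℂ) (hv : v * star v = 1) :
    (kD a b v)ᴴ * kD a b v = diagonal ![((a ^ 2 : ℝ) : ℂ), ((b ^ 2 : ℝ) : ℂ)] := by
  simp only [Complex.star_def] at hv
  ext i j
  fin_cases i <;> fin_cases j <;> simp [kD, mul_apply, Fin.sum_univ_two]
  · linear_combination (a : ℂ) ^ 2 * hv
  · ring

lemma kA_sq (a b : ℝ) (v : ℂ) (hv : v * star v = 1) :
    (kA a b v)ᴴ * kA a b v = diagonal ![((a ^ 2 : ℝ) : ℂ), ((b ^ 2 : ℝ) : ℂ)] := by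
  simp only [Complex.star_def] at hv
  ext i j
  fin_cases i <;> fin_cases j <;> simp [kA, mul_apply, Fin.sum_univ_two]
  · ring
  · linear_combination (b : ℂ) ^ 2 * hv

lemma kD_out (a b P Q : ℝ) (g u : ℂ) (hg : g * star g = 1) (hu : u * star u = 1) :
    kD a b (g * star u) * !![((P ^ 2 : ℝ) : ℂ), P * Q * u; P * Q * star u, ((Q ^ 2 : ℝ) : ℂ)] *
      (kD a b (g * star u))ᴴ =
    !![((((a * P) ^ 2 : ℝ)) : ℂ), ((a * P * (b * Q) : ℝ) : ℂ) * g;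
       ((a * P * (b * Q) : ℝ) : ℂ) * star g, (((b * Q) ^ 2 : ℝ) : ℂ)] := by
  simp only [Complex.star_def] at hg hu
  ext i j
  fin_cases i <;> fin_cases j <;> simp [kD, mul_apply, Fin.sum_univ_two]
  · linear_combination (a : ℂ) ^ 2 * P ^ 2 * (u * (starRingEnd ℂ) u * hg + hu)
  · linear_combination (a : ℂ) * P * b * Q * g * hu
  · linear_combination (a : ℂ) * P * b * Q * (starRingEnd ℂ) g * hu
  · ring

lemma kA_out (a b P Q : ℝ) (g u : ℂ) (hg : g * star g = 1) (hu : u * star u = 1) :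
    kA a b (g * u) * !![((P ^ 2 : ℝ) : ℂ), P * Q * u; P * Q * star u, ((Q ^ 2 : ℝ) : ℂ)] *
      (kA a b (g * u))ᴴ =
    !![((((b * Q) ^ 2 : ℝ)) : ℂ), ((a * P * (b * Q) : ℝ) : ℂ) * g;
       ((a * P * (b * Q) : ℝ) : ℂ) * star g, (((a * P) ^ 2 : ℝ) : ℂ)] := by
  simp only [Complex.star_def] at hg hu
  ext i j
  fin_cases i <;> fin_cases j <;> simp [kA, mul_apply, Fin.sum_univ_two]
  · linear_combination (b : ℂ) ^ 2 * Q ^ 2 * (u * (starRingEnd ℂ) u * hg + hu)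
  · linear_combination (a : ℂ) * P * b * Q * g * hu
  · linear_combination (a : ℂ) * P * b * Q * (starRingEnd ℂ) g * hu
  · ring

lemma aux_real_s19 (p q c κ : ℝ) (hc : 0 ≤ c) (hκ0 : 0 ≤ κ) (hcpq : c ≤ p + q)
    (h0 : c * (1 - κ) ≤ 2 * p) (h1 : c * (1 - κ) ≤ 2 * q) :
    ∃ m1 m2 : ℝ, 0 ≤ m1 ∧ 0 ≤ m2 ∧ m1 + m2 = c ∧
      m1 * (1 + κ) / 2 + m2 * (1 - κ) / 2 ≤ p ∧ m1 * (1 - κ) / 2 + m2 * (1 + κ) / 2 ≤ q := by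
  rcases hκ0.eq_or_lt with rfl | hκ
  · exact ⟨c, 0, hc, le_rfl, by ring, by linarith, by linarith⟩
  · obtain ⟨d, h2, h3, h4, h5⟩ : ∃ d : ℝ, -c ≤ d ∧ d ≤ c ∧ c - 2 * q ≤ d * κ ∧ d * κ ≤ 2 * p - c := by
      refine ⟨max (c - 2 * q) (-c * κ) / κ, ?_, ?_, ?_, ?_⟩
      · rw [le_div_iff₀ hκ]; exact le_max_right _ _
      · rw [div_le_iff₀ hκ]; apply max_le <;> nlinarith
      · rw [div_mul_cancel₀ _ hκ.ne']; exact le_max_left _ _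
      · rw [div_mul_cancel₀ _ hκ.ne']; apply max_le <;> nlinarith
    exact ⟨(c + d) / 2, (c - d) / 2, by linarith, by linarith, by ring, by linarith, by linarith⟩

lemma aux_mix (κ z : ℝ) (hκ : 0 ≤ κ) (hz : z ^ 2 ≤ κ ^ 2) :
    ∃ l : ℝ, 0 ≤ l ∧ l ≤ 1 ∧ (2 * l - 1) * κ = z := by
  have := abs_le.1 (abs_le_of_sq_le_sq hz hκ)
  rcases hκ.eq_or_lt with rfl | hκ
  · exact ⟨0, le_rfl, zero_le_one, by linarith [this.1, this.2]⟩
  · refine ⟨(1 + z / κ) / 2, ?_, ?_, by field_simp; ring⟩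
    · have : -1 ≤ z / κ := by rw [le_div_iff₀ hκ]; linarith [this.1]
      linarith
    · have : z / κ ≤ 1 := by rw [div_le_iff₀ hκ]; linarith [this.2]
      linarith

lemma aux_lower_s19 (W : Matrix (Fin 2) (Fin 2) ℂ) (p q : ℝ) (hp : 0 ≤ p) (hq : 0 ≤ q)
    (hW0 : W 0 0 = p) (hW1 : W 1 1 = q) (h10 : W 1 0 = star (W 0 1))
    (hd : W 0 1 * star (W 0 1) = p * q)
    (c sx sy sz : ℝ) (hc : 0 ≤ c)
    (hs : sx ^ 2 + sy ^ 2 + sz ^ 2 ≤ 1) (hsc : 0 < sx ^ 2 + sy ^ 2)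
    (hcpq : c ≤ p + q)
    (h0 : c * (1 - √(1 - (sx ^ 2 + sy ^ 2))) ≤ 2 * p)
    (h1 : c * (1 - √(1 - (sx ^ 2 + sy ^ 2))) ≤ 2 * q) :
    ∃ (N : ℕ) (K : Fin N → Matrix (Fin 2) (Fin 2) ℂ),
        (∀ n, IsIncoherentKraus (K n)) ∧
        ((1 : Matrix (Fin 2) (Fin 2) ℂ) - ∑ n, (K n)ᴴ * K n).PosSemidef ∧
        ∑ n, K n * W * (K n)ᴴ = (c : ℂ) • blochState sx sy sz := by
  set S := √(sx ^ 2 + sy ^ 2) with hS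
  have hS0 : 0 < S := Real.sqrt_pos.2 hsc
  have hS2 : S ^ 2 = sx ^ 2 + sy ^ 2 := Real.sq_sqrt hsc.le
  set κ := √(1 - (sx ^ 2 + sy ^ 2)) with hκ
  have hκ0 : 0 ≤ κ := Real.sqrt_nonneg _
  have hκ2 : κ ^ 2 = 1 - (sx ^ 2 + sy ^ 2) := Real.sq_sqrt (by nlinarith [sq_nonneg sz])
  have hκ1 : κ < 1 := by nlinarith
  rcases hc.eq_or_lt with rfl | hc'
  · refine ⟨0, fun _ => 0, fun n => n.elim0, ?_, ?_⟩
    · simpa using PosSemidef.one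
    · simp
  have hp' : 0 < p := by nlinarith
  have hq' : 0 < q := by nlinarith
  obtain ⟨m1, m2, hm1, hm2, hm, hmp, hmq⟩ := aux_real_s19 p q c κ hc hκ0 hcpq h0 h1
  obtain ⟨l, hl0, hl1, hl⟩ := aux_mix κ sz hκ0 (by linarith)
  obtain ⟨P, hP, rfl⟩ : ∃ P : ℝ, 0 < P ∧ P ^ 2 = p := ⟨√p, Real.sqrt_pos.2 hp', Real.sq_sqrt hp⟩
  obtain ⟨Q, hQ, rfl⟩ : ∃ Q : ℝ, 0 < Q ∧ Q ^ 2 = q := ⟨√q, Real.sqrt_pos.2 hq', Real.sq_sqrt hq⟩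
  have hPc : (P : ℂ) ≠ 0 := by exact_mod_cast hP.ne'
  have hQc : (Q : ℂ) ≠ 0 := by exact_mod_cast hQ.ne'
  have hSc : (S : ℂ) ≠ 0 := by exact_mod_cast hS0.ne'
  obtain ⟨u, hu, hWu⟩ : ∃ u : ℂ, u * star u = 1 ∧ W 0 1 = P * Q * u := by
    refine ⟨W 0 1 / (P * Q), ?_, by field_simp⟩
    simp only [star_div₀, star_mul', Complex.star_def, Complex.conj_ofReal] at hd ⊢
    field_simp
    rw [hd]; push_cast; ring
  obtain ⟨g, hg, hgS⟩ : ∃ g : ℂ, g * star g = 1 ∧ (sx : ℂ) - sy * Complex.I = S * g := by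
    refine ⟨((sx : ℂ) - sy * Complex.I) / S, ?_, by field_simp⟩
    simp only [star_div₀, star_mul', star_sub, Complex.star_def, Complex.conj_ofReal, Complex.conj_I]
    field_simp
    have : (S : ℂ) ^ 2 = sx ^ 2 + sy ^ 2 := by exact_mod_cast hS2
    rw [this]
    linear_combination (-(sy : ℂ) ^ 2) * Complex.I_sq
  have hgS' : (sx : ℂ) + sy * Complex.I = S * star g := by
    have := congrArg star hgS
    simpa using this
  have hWm : W = !![((P ^ 2 : ℝ) : ℂ), P * Q * u; P * Q * star u, ((Q ^ 2 : ℝ) : ℂ)] := by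
    ext i j
    fin_cases i <;> fin_cases j <;> simp [hW0, hW1, h10, hWu]
  obtain ⟨α, hα0, hα⟩ : ∃ α : ℝ, 0 ≤ α ∧ α ^ 2 = (1 + κ) / 2 :=
    ⟨_, Real.sqrt_nonneg _, Real.sq_sqrt (by linarith)⟩
  obtain ⟨β, hβ0, hβ⟩ : ∃ α : ℝ, 0 ≤ α ∧ α ^ 2 = (1 - κ) / 2 :=
    ⟨_, Real.sqrt_nonneg _, Real.sq_sqrt (by linarith)⟩
  have hαβ : α * β = S / 2 := by
    have : (α * β) ^ 2 = (S / 2) ^ 2 := by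
      rw [mul_pow, hα, hβ, div_pow, hS2]; nlinarith
    exact (pow_left_inj₀ (by positivity) (by positivity) two_ne_zero).1 this
  have ex : ∀ x : ℝ, 0 ≤ x → ∃ w : ℝ, w ^ 2 = x := fun x hx => ⟨_, Real.sq_sqrt hx⟩
  obtain ⟨w1, hw1⟩ := ex (m1 * l) (mul_nonneg hm1 hl0)
  obtain ⟨w2, hw2⟩ := ex (m2 * (1 - l)) (mul_nonneg hm2 (by linarith))
  obtain ⟨w3, hw3⟩ := ex (m1 * (1 - l)) (mul_nonneg hm1 (by linarith))
  obtain ⟨w4, hw4⟩ := ex (m2 * l) (mul_nonneg hm2 hl0)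
  have huu : (g * star u) * star (g * star u) = 1 := by
    simp only [star_mul', star_star]; linear_combination u * star u * hg + hu
  have huu2 : (g * u) * star (g * u) = 1 := by
    simp only [star_mul']; linear_combination u * star u * hg + hu
  refine ⟨4, ![kD (w1 * α / P) (w1 * β / Q) (g * star u), kD (w2 * β / P) (w2 * α / Q) (g * star u),
    kA (w3 * α / P) (w3 * β / Q) (g * u), kA (w4 * β / P) (w4 * α / Q) (g * u)], ?_, ?_, ?_⟩
  · intro n
    fin_cases n
    · exact kD_inc _ _ _
    · exact kD_inc _ _ _
    · exact kA_inc _ _ _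
    · exact kA_inc _ _ _
  · have e : (1 : Matrix (Fin 2) (Fin 2) ℂ) - (diagonal ![(((w1 * α / P) ^ 2 : ℝ) : ℂ), (((w1 * β / Q) ^ 2 : ℝ) : ℂ)]
        + diagonal ![(((w2 * β / P) ^ 2 : ℝ) : ℂ), (((w2 * α / Q) ^ 2 : ℝ) : ℂ)]
        + diagonal ![(((w3 * α / P) ^ 2 : ℝ) : ℂ), (((w3 * β / Q) ^ 2 : ℝ) : ℂ)]
        + diagonal ![(((w4 * β / P) ^ 2 : ℝ) : ℂ), (((w4 * α / Q) ^ 2 : ℝ) : ℂ)]) =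
        diagonal ![((1 - (m1 * (1 + κ) / 2 + m2 * (1 - κ) / 2) / P ^ 2 : ℝ) : ℂ),
          ((1 - (m1 * (1 - κ) / 2 + m2 * (1 + κ) / 2) / Q ^ 2 : ℝ) : ℂ)] := by
      simp only [div_pow, mul_pow, hα, hβ, hw1, hw2, hw3, hw4]
      ext i j
      fin_cases i <;> fin_cases j <;> simp <;> field_simp <;> ring
    simp only [Fin.sum_univ_four]
    simp only [cons_val]
    rw [kD_sq _ _ _ huu, kD_sq _ _ _ huu, kA_sq _ _ _ huu2, kA_sq _ _ _ huu2, e]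
    apply PosSemidef.diagonal
    intro i
    fin_cases i
    · simp only [Fin.zero_eta, cons_val_zero, Pi.zero_apply]
      rw [Complex.zero_le_real, sub_nonneg, div_le_one (by positivity)]; exact hmp
    · simp only [Fin.mk_one, cons_val_one, Pi.zero_apply]
      simp only [cons_val]
      rw [Complex.zero_le_real, sub_nonneg, div_le_one (by positivity)]; exact hmq
  · have dP : ∀ x : ℝ, x / P * P = x := fun x => div_mul_cancel₀ _ hP.ne'
    have dQ : ∀ x : ℝ, x / Q * Q = x := fun x => div_mul_cancel₀ _ hQ.ne'
    simp only [Fin.sum_univ_four]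
    simp only [cons_val]
    rw [hWm, kD_out _ _ _ _ _ _ hg hu, kD_out _ _ _ _ _ _ hg hu, kA_out _ _ _ _ _ _ hg hu,
      kA_out _ _ _ _ _ _ hg hu]
    simp only [dP, dQ]
    have o1 : ∀ w : ℝ, w * α * (w * β) = w ^ 2 * (S / 2) := fun w => by rw [← hαβ]; ring
    have o2 : ∀ w : ℝ, w * β * (w * α) = w ^ 2 * (S / 2) := fun w => by rw [← hαβ]; ring
    simp only [o1, o2, mul_pow, hα, hβ, hw1, hw2, hw3, hw4, blochState, hgS, hgS', ← hl, ← hm]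
    ext i j
    fin_cases i <;> fin_cases j <;> simp <;> ring

lemma aux_W (ψ : Fin 2 × Fin 2 → ℂ) (M : Matrix (Fin 2) (Fin 2) ℂ) :
    ptraceA ((M ⊗ₖ (1 : Matrix (Fin 2) (Fin 2) ℂ)) * Matrix.vecMulVec ψ (star ψ)) =
      (Matrix.of fun i j => star (ψ (i, j)))ᴴ * Mᵀ * (Matrix.of fun i j => star (ψ (i, j))) := by
  ext j j'
  fin_cases j <;> fin_cases j' <;>
    simp [ptraceA, mul_apply, Fin.sum_univ_two, Fintype.sum_prod_type, vecMulVec_apply] <;> ring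

lemma aux_perp (a b : Fin 3 → ℝ) : ∃ x y z : ℝ, x ^ 2 + y ^ 2 + z ^ 2 = 1 ∧
    a 0 * x + a 1 * y + a 2 * z = 0 ∧ b 0 * x + b 1 * y + b 2 * z = 0 := by
  obtain ⟨v, hv, h⟩ := (exists_mulVec_eq_zero_iff (M := Matrix.of ![a, b, 0])).2
    (det_eq_zero_of_row_eq_zero 2 (by intro j; simp))
  have h0 := congrFun h 0
  have h1 := congrFun h 1
  simp [mulVec, dotProduct, Fin.sum_univ_three] at h0 h1
  have hpos : 0 < v 0 ^ 2 + v 1 ^ 2 + v 2 ^ 2 := by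
    by_contra hn
    apply hv
    have h0 : v 0 = 0 := by nlinarith [sq_nonneg (v 0), sq_nonneg (v 1), sq_nonneg (v 2)]
    have h1 : v 1 = 0 := by nlinarith [sq_nonneg (v 0), sq_nonneg (v 1), sq_nonneg (v 2)]
    have h2 : v 2 = 0 := by nlinarith [sq_nonneg (v 0), sq_nonneg (v 1), sq_nonneg (v 2)]
    ext i; fin_cases i <;> simp [h0, h1, h2]
  set r := √(v 0 ^ 2 + v 1 ^ 2 + v 2 ^ 2) with hr
  have hr0 : 0 < r := Real.sqrt_pos.2 hpos
  have hr2 : r ^ 2 = _ := Real.sq_sqrt hpos.le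
  refine ⟨v 0 / r, v 1 / r, v 2 / r, ?_, ?_, ?_⟩
  · simp only [div_pow]; rw [← add_div, ← add_div, hr2, div_self hpos.ne']
  · rw [← mul_div_assoc, ← mul_div_assoc, ← mul_div_assoc, ← add_div, ← add_div, h0, zero_div]
  · rw [← mul_div_assoc, ← mul_div_assoc, ← mul_div_assoc, ← add_div, ← add_div, h1, zero_div]

lemma bloch_herm (x y z : ℝ) : (blochState x y z).IsHermitian := by
  ext i j
  fin_cases i <;> fin_cases j <;> simp [blochState, Complex.ext_iff]

lemma bloch_psd (x y z : ℝ) (h : x ^ 2 + y ^ 2 + z ^ 2 = 1) : (blochState x y z).PosSemidef := by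
  have : blochState x y z = (blochState x y z)ᴴ * blochState x y z := by
    rw [(bloch_herm x y z).eq]
    have h' : (x : ℂ) ^ 2 + y ^ 2 + z ^ 2 = 1 := by exact_mod_cast h
    have hI := Complex.I_sq
    ext i j
    fin_cases i <;> fin_cases j <;> simp [blochState, mul_apply, Fin.sum_univ_two]
    · linear_combination (-1 / 4 : ℂ) * h' + (1 / 4 : ℂ) * y ^ 2 * hI
    · ring
    · ring
    · linear_combination (-1 / 4 : ℂ) * h' + (1 / 4 : ℂ) * y ^ 2 * hI
  rw [this]
  exact posSemidef_conjTranspose_mul_self _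

lemma bloch_sum (x y z : ℝ) : blochState x y z + blochState (-x) (-y) (-z) = 1 := by
  ext i j
  fin_cases i <;> fin_cases j <;> simp [blochState] <;> ring

/-- Bloch-type vector of column `j` of `ψ`. -/
noncomputable def colV (ψ : Fin 2 × Fin 2 → ℂ) (j : Fin 2) : Fin 3 → ℝ :=
  ![2 * (ψ (1, j) * star (ψ (0, j))).re, 2 * (ψ (1, j) * star (ψ (0, j))).im,
    Complex.normSq (ψ (0, j)) - Complex.normSq (ψ (1, j))]

lemma aux_diag (ψ : Fin 2 × Fin 2 → ℂ) (j : Fin 2) (x y z : ℝ)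
    (h : colV ψ j 0 * x + colV ψ j 1 * y + colV ψ j 2 * z = 0) :
    ptraceA ((blochState x y z ⊗ₖ (1 : Matrix (Fin 2) (Fin 2) ℂ)) * Matrix.vecMulVec ψ (star ψ)) j j =
      (((Complex.normSq (ψ (0, j)) + Complex.normSq (ψ (1, j))) / 2 : ℝ) : ℂ) := by
  rw [aux_W]
  simp [colV, Complex.normSq_apply] at h
  apply Complex.ext
  · simp [mul_apply, Fin.sum_univ_two, blochState, Complex.normSq_apply]
    linear_combination (1 / 2) * h
  · simp [mul_apply, Fin.sum_univ_two, blochState, Complex.normSq_apply]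
    ring

lemma aux_achieve (ψ : Fin 2 × Fin 2 → ℂ) (x y z : ℝ) (hn : x ^ 2 + y ^ 2 + z ^ 2 = 1)
    (ha : colV ψ 0 0 * x + colV ψ 0 1 * y + colV ψ 0 2 * z = 0)
    (hb : colV ψ 1 0 * x + colV ψ 1 1 * y + colV ψ 1 2 * z = 0)
    (rz : ℝ) (hr0 : Complex.normSq (ψ (0, 0)) + Complex.normSq (ψ (1, 0)) = (1 + rz) / 2)
    (hr1 : Complex.normSq (ψ (0, 1)) + Complex.normSq (ψ (1, 1)) = (1 - rz) / 2)
    (c sx sy sz : ℝ) (hc : 0 ≤ c)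
    (hs : sx ^ 2 + sy ^ 2 + sz ^ 2 ≤ 1) (hsc : 0 < sx ^ 2 + sy ^ 2)
    (hc1 : c ≤ 1) (hc2 : c * (1 - √(1 - (sx ^ 2 + sy ^ 2))) ≤ 1 - |rz|) :
    ∃ (N : ℕ) (K : Fin N → Matrix (Fin 2) (Fin 2) ℂ),
        (∀ n, IsIncoherentKraus (K n)) ∧
        ((1 : Matrix (Fin 2) (Fin 2) ℂ) - ∑ n, (K n)ᴴ * K n).PosSemidef ∧
        ∑ n, K n * ptraceA ((blochState x y z ⊗ₖ (1 : Matrix (Fin 2) (Fin 2) ℂ)) *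
            Matrix.vecMulVec ψ (star ψ)) * (K n)ᴴ = ((c / 2 : ℝ) : ℂ) • blochState sx sy sz := by
  have hM := bloch_psd x y z hn
  have d0 := aux_diag ψ 0 x y z ha
  have d1 := aux_diag ψ 1 x y z hb
  have hWp : (ptraceA ((blochState x y z ⊗ₖ (1 : Matrix (Fin 2) (Fin 2) ℂ)) *
            Matrix.vecMulVec ψ (star ψ))).PosSemidef := by
    rw [aux_W]; exact hM.transpose.conjTranspose_mul_mul_same _
  have hdet : (ptraceA ((blochState x y z ⊗ₖ (1 : Matrix (Fin 2) (Fin 2) ℂ)) *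
            Matrix.vecMulVec ψ (star ψ))).det = 0 := by
    rw [aux_W, det_mul, det_mul, det_transpose]
    have : (blochState x y z).det = 0 := by
      have h' : (x : ℂ) ^ 2 + y ^ 2 + z ^ 2 = 1 := by exact_mod_cast hn
      rw [det_fin_two]; simp [blochState]
      linear_combination (-1 / 4 : ℂ) * h' + (1 / 4 : ℂ) * y ^ 2 * Complex.I_sq
    rw [this]; ring
  generalize ptraceA ((blochState x y z ⊗ₖ (1 : Matrix (Fin 2) (Fin 2) ℂ)) *
            Matrix.vecMulVec ψ (star ψ)) = W at *
  have h10 : W 1 0 = star (W 0 1) := (hWp.isHermitian.apply 1 0).symm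
  rw [hr0] at d0
  rw [hr1] at d1
  rw [det_fin_two, h10, d0, d1] at hdet
  have := neg_abs_le rz
  have := le_abs_self rz
  have p0 : 0 ≤ (1 + rz) / 2 := by
    rw [← hr0]; exact add_nonneg (Complex.normSq_nonneg _) (Complex.normSq_nonneg _)
  have p1 : 0 ≤ (1 - rz) / 2 := by
    rw [← hr1]; exact add_nonneg (Complex.normSq_nonneg _) (Complex.normSq_nonneg _)
  refine aux_lower_s19 W _ _ (by linarith) (by linarith) d0 d1 h10 (by linear_combination -hdet)
    (c / 2) sx sy sz (by linarith) hs hsc (by linarith) (by linarith) (by linarith)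
/-- **Theorem 2 (paper), operational form.** For a shared pure two-qubit state `ψ`, the
supremum of the success probability over all one-way LQICC protocols (a POVM on Alice's
qubit followed by outcome-dependent stochastic incoherent operations on Bob's side)
converting the shared state into the target qubit state `σ` equals
`min{1, (1-|rz|)(1+√(1-s²))/s²}`. -/
theorem assisted_conversion_optimal_probability
    (ψ : Fin 2 × Fin 2 → ℂ) (hψ : ∑ x, Complex.normSq (ψ x) = 1)
    (rx ry rz : ℝ)
    (hB : ptraceA (Matrix.vecMulVec ψ (star ψ)) = blochState rx ry rz)
    (sx sy sz : ℝ) (hs : sx ^ 2 + sy ^ 2 + sz ^ 2 ≤ 1) (hsc : 0 < sx ^ 2 + sy ^ 2)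
    (T : Set ℝ)
    (hT : T = {x : ℝ | ∃ (m : ℕ) (M : Fin m → Matrix (Fin 2) (Fin 2) ℂ)
        (c : Fin m → ℝ),
      (∀ i, (M i).IsHermitian) ∧ (∀ i, (M i).PosSemidef) ∧ (∑ i, M i = 1) ∧
      (∀ i, 0 ≤ c i) ∧
      (∀ i, ∃ (N : ℕ) (K : Fin N → Matrix (Fin 2) (Fin 2) ℂ),
        (∀ n, IsIncoherentKraus (K n)) ∧
        ((1 : Matrix (Fin 2) (Fin 2) ℂ) - ∑ n, (K n)ᴴ * K n).PosSemidef ∧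
        ∑ n, K n * ptraceA ((M i ⊗ₖ (1 : Matrix (Fin 2) (Fin 2) ℂ)) *
            Matrix.vecMulVec ψ (star ψ)) * (K n)ᴴ = (c i : ℂ) • blochState sx sy sz) ∧
      x = ∑ i, c i}) :
    sSup T = min 1 ((1 - |rz|) * (1 + Real.sqrt (1 - (sx ^ 2 + sy ^ 2))) /
        (sx ^ 2 + sy ^ 2)) := by
  set κ := √(1 - (sx ^ 2 + sy ^ 2)) with hκ
  have hκ0 : 0 ≤ κ := Real.sqrt_nonneg _
  have hκ2 : κ ^ 2 = 1 - (sx ^ 2 + sy ^ 2) := Real.sq_sqrt (by nlinarith [sq_nonneg sz])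
  have hκ1 : κ < 1 := by nlinarith
  have hform : (1 - |rz|) * (1 + κ) / (sx ^ 2 + sy ^ 2) = (1 - |rz|) / (1 - κ) := by
    rw [div_eq_div_iff hsc.ne' (by linarith)]
    linear_combination (-(1 - |rz|)) * hκ2
  rw [hform]
  have hr0 : Complex.normSq (ψ (0, 0)) + Complex.normSq (ψ (1, 0)) = (1 + rz) / 2 := by
    have := congrArg (fun X => (X 0 0).re) hB
    simp [ptraceA, Fin.sum_univ_two, vecMulVec_apply, blochState] at this
    simp only [Complex.normSq_apply]; linarith
  have hr1 : Complex.normSq (ψ (0, 1)) + Complex.normSq (ψ (1, 1)) = (1 - rz) / 2 := by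
    have := congrArg (fun X => (X 1 1).re) hB
    simp [ptraceA, Fin.sum_univ_two, vecMulVec_apply, blochState] at this
    simp only [Complex.normSq_apply]; linarith
  have habs : |rz| ≤ 1 := by
    have a0 := Complex.normSq_nonneg (ψ (0, 0))
    have a1 := Complex.normSq_nonneg (ψ (1, 0))
    have a2 := Complex.normSq_nonneg (ψ (0, 1))
    have a3 := Complex.normSq_nonneg (ψ (1, 1))
    exact abs_le.2 ⟨by linarith, by linarith⟩
  apply IsGreatest.csSup_eq
  subst hT
  constructor
  · set C := min 1 ((1 - |rz|) / (1 - κ)) with hC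
    have hC0 : 0 ≤ C := le_min zero_le_one (div_nonneg (by linarith) (by linarith))
    have hC1 : C ≤ 1 := min_le_left _ _
    have hC2 : C * (1 - κ) ≤ 1 - |rz| := (le_div_iff₀ (by linarith)).1 (min_le_right _ _)
    obtain ⟨x, y, z, hn, ha, hb⟩ := aux_perp (colV ψ 0) (colV ψ 1)
    have hn' : (-x) ^ 2 + (-y) ^ 2 + (-z) ^ 2 = 1 := by linarith
    refine ⟨2, ![blochState x y z, blochState (-x) (-y) (-z)], ![C / 2, C / 2], ?_, ?_, ?_, ?_, ?_, ?_⟩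
    · intro i
      fin_cases i
      · exact bloch_herm _ _ _
      · exact bloch_herm _ _ _
    · intro i
      fin_cases i
      · exact bloch_psd _ _ _ hn
      · exact bloch_psd _ _ _ hn'
    · simpa [Fin.sum_univ_two] using bloch_sum x y z
    · intro i
      fin_cases i <;> simp <;> linarith
    · intro i
      fin_cases i
      · exact aux_achieve ψ x y z hn ha hb rz hr0 hr1 C sx sy sz hC0 hs hsc hC1 hC2
      · exact aux_achieve ψ (-x) (-y) (-z) hn' (by linarith) (by linarith) rz hr0 hr1 C sx sy sz
          hC0 hs hsc hC1 hC2
    · simp [Fin.sum_univ_two]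
  · rintro t ⟨m, M, c, -, hM, hsum, hc, hK, rfl⟩
    choose N K h1 h2 h3 using hK
    have hWp : ∀ i, (ptraceA ((M i ⊗ₖ (1 : Matrix (Fin 2) (Fin 2) ℂ)) *
            Matrix.vecMulVec ψ (star ψ))).PosSemidef := by
      intro i
      rw [aux_W]; exact (hM i).transpose.conjTranspose_mul_mul_same _
    have hub := fun i => aux_upper_s19 _ (hWp i) (N i) (K i) (h1 i) (h2 i) (c i) sx sy sz (hc i) (h3 i)
    have hWs : ∑ i, ptraceA ((M i ⊗ₖ (1 : Matrix (Fin 2) (Fin 2) ℂ)) *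
            Matrix.vecMulVec ψ (star ψ)) = blochState rx ry rz := by
      rw [← hB]
      have := aux_W ψ 1
      rw [one_kronecker_one, one_mul, ← hsum] at this
      rw [this, transpose_sum, Finset.mul_sum, Finset.sum_mul]
      exact Finset.sum_congr rfl fun i _ => aux_W ψ (M i)
    have e0 : ∑ i, (ptraceA ((M i ⊗ₖ (1 : Matrix (Fin 2) (Fin 2) ℂ)) *
            Matrix.vecMulVec ψ (star ψ)) 0 0).re = (1 + rz) / 2 := by
      have := congrArg (fun X => (X 0 0).re) hWs
      simp only [Matrix.sum_apply, Complex.re_sum] at this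
      rw [this]; simp [blochState]
    have e1 : ∑ i, (ptraceA ((M i ⊗ₖ (1 : Matrix (Fin 2) (Fin 2) ℂ)) *
            Matrix.vecMulVec ψ (star ψ)) 1 1).re = (1 - rz) / 2 := by
      have := congrArg (fun X => (X 1 1).re) hWs
      simp only [Matrix.sum_apply, Complex.re_sum] at this
      rw [this]; simp [blochState]
    have s1 := Finset.sum_le_sum fun i (_ : i ∈ Finset.univ) => (hub i).1
    have s2 := Finset.sum_le_sum fun i (_ : i ∈ Finset.univ) => (hub i).2.1
    have s3 := Finset.sum_le_sum fun i (_ : i ∈ Finset.univ) => (hub i).2.2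
    rw [Finset.sum_add_distrib, e0, e1] at s1
    rw [← Finset.sum_mul, ← Finset.mul_sum, e0] at s2
    rw [← Finset.sum_mul, ← Finset.mul_sum, e1] at s3
    refine le_min (by linarith) ?_
    rw [le_div_iff₀ (by linarith)]
    rcases abs_cases rz with ⟨h, _⟩ | ⟨h, _⟩ <;> rw [h] <;> linarith
end
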